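/- arXiv:2503.12465 — 3 statements merged into one kernel-verified Lean document; each statement's English description precedes it below -/
import Mathlib

section
/- Let e : (0,∞) → ℝ be a Synge-type EOS and d ≥ 1. For any σ ∈ ℝ, the set Ω_σ ⊆ ℝ^{d+2} is convex. -/
/-!
Write `U = (D, m, E)`. The proof rests on the convexity of the shifted solid cones
`C(c, q) = {E + q ≥ 0, |m|² + c² D² ≤ (E + q)²}`, a consequence of the Cauchy–Schwarz inequality
(`convex_coneSet`). Put `R = exp Z`. Two families of such cones control `Ω_σ`.

* Thermodynamic part: every `U ∈ Ω_σ` lies in `C(h(θ_*), p_*(θ_*))` for every `θ_* > 0`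
  (`Uvec_mem_entropy_cone`). Along an isentrope `dp = ρ dh`, and the Synge condition says exactly
  that `R / h` is increasing (the sound speed is below the speed of light), so that
  `t R(t) - k h(t)² / 2` with `k = R(θ) / h(θ)` is minimal at `t = θ` (`isentrope_ineq`).
  Conversely, a state `U(ρ, v, θ)` in the single cone `C(h(θ), p_*(θ))` has
  `ρ θ ≤ p_*(θ)`, which is `S(ρ, θ) ≥ σ` (`entropy_of_mem_cone`).
* Solvability part: every physical state lies in `C(1 + e(δ), 0)` for `δ > 0` small enough, because
  `(1 + e(ξ))² - ξ²` is nondecreasing; and every point of `C(1 + e(δ), 0)` with `D, E > 0` is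
  `U(ρ, v, θ)` for some primitive state, by the intermediate value theorem applied to the scalar
  equation for the pressure (`exists_primitive`).

A convex combination of two points of `Ω_σ` stays in all these cones: the second family provides
its primitive variables and the first one its entropy bound.

Since `e` is only differentiable, `Z' = e' / θ` is not immediate from the definition of `Z`; it
follows from integration by parts, which turns `Z` into `e(θ)/θ` plus the integral of the
continuous function `e(ξ)/ξ²` (`hasDerivAt_Zfun`).
-/

open scoped BigOperators

noncomputable section

/-- Euclidean dot product on `Fin d → ℝ`. -/
def dotp {d : ℕ} (v w : Fin d → ℝ) : ℝ := ∑ i, v i * w i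

/-- Squared Euclidean norm on `Fin d → ℝ`. -/
def nsq {d : ℕ} (v : Fin d → ℝ) : ℝ := ∑ i, (v i) ^ 2

/-- Euclidean norm on `Fin d → ℝ`. -/
def nrm {d : ℕ} (v : Fin d → ℝ) : ℝ := Real.sqrt (nsq v)

/-- `Z(θ) = ∫₁^θ e'(ξ)/ξ dξ`. -/
def Zfun (e : ℝ → ℝ) (θ : ℝ) : ℝ := ∫ ξ in (1:ℝ)..θ, deriv e ξ / ξ

/-- Specific enthalpy `h(θ) = 1 + θ + e(θ)`. -/
def hfun (e : ℝ → ℝ) (θ : ℝ) : ℝ := 1 + θ + e θ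

/-- Lorentz factor `γ = (1 − |v|²)^{−1/2}`. -/
def gam {d : ℕ} (v : Fin d → ℝ) : ℝ := 1 / Real.sqrt (1 - nsq v)

/-- Conservative vector `U(ρ,v,θ) = (ργ, ρh(θ)γ²v, ρh(θ)γ² − p)` with `p = ρθ`,
viewed as an element of `ℝ × ℝ^d × ℝ ≃ ℝ^{d+2}`. -/
def Uvec (e : ℝ → ℝ) {d : ℕ} (ρ : ℝ) (v : Fin d → ℝ) (θ : ℝ) : ℝ × (Fin d → ℝ) × ℝ :=
  (ρ * gam v,
   fun j => ρ * hfun e θ * (gam v) ^ 2 * v j,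
   ρ * hfun e θ * (gam v) ^ 2 - ρ * θ)

/-- Flux `F_i(ρ,v,θ) = (ργv_i, ρh(θ)γ²v_i v + p e_i, ρh(θ)γ²v_i)` with `p = ρθ`. -/
def Fvec (e : ℝ → ℝ) {d : ℕ} (i : Fin d) (ρ : ℝ) (v : Fin d → ℝ) (θ : ℝ) :
    ℝ × (Fin d → ℝ) × ℝ :=
  (ρ * gam v * v i,
   fun j => ρ * hfun e θ * (gam v) ^ 2 * v i * v j + ρ * θ * (if j = i then 1 else 0),
   ρ * hfun e θ * (gam v) ^ 2 * v i)

/-- Euclidean inner product on `ℝ^{d+2} = ℝ × ℝ^d × ℝ`. -/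
def dot3 {d : ℕ} (u w : ℝ × (Fin d → ℝ) × ℝ) : ℝ :=
  u.1 * w.1 + dotp u.2.1 w.2.1 + u.2.2 * w.2.2

/-- `ñ_*(v_*) = (−√(1−|v_*|²), −v_*, 1)`. -/
def ntil {d : ℕ} (vs : Fin d → ℝ) : ℝ × (Fin d → ℝ) × ℝ :=
  (-Real.sqrt (1 - nsq vs), fun j => -vs j, 1)

/-- `n_*(v_*,θ_*) = (−h(θ_*)√(1−|v_*|²), −v_*, 1)`. -/
def nstar (e : ℝ → ℝ) {d : ℕ} (vs : Fin d → ℝ) (θs : ℝ) : ℝ × (Fin d → ℝ) × ℝ :=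
  (-(hfun e θs) * Real.sqrt (1 - nsq vs), fun j => -vs j, 1)

/-- `p_*(θ_*) = θ_* exp(Z(θ_*) − σ)`. -/
def pstar (e : ℝ → ℝ) (σ θs : ℝ) : ℝ := θs * Real.exp (Zfun e θs - σ)

/-- The admissible set `Ω_σ ⊆ ℝ^{d+2}`. -/
def OmegaSet (e : ℝ → ℝ) (d : ℕ) (σ : ℝ) : Set (ℝ × (Fin d → ℝ) × ℝ) :=
  { u | ∃ ρ θ : ℝ, ∃ v : Fin d → ℝ,
      0 < ρ ∧ 0 < θ ∧ nrm v < 1 ∧ σ ≤ -Real.log ρ + Zfun e θ ∧ u = Uvec e ρ v θ }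

/-! ### Shifted cones -/

/-- The solid cone `{E ≥ √(|m|² + c² D²)}` with its apex moved to `E = -q`, in square-root-free
form. -/
def coneSet (d : ℕ) (c q : ℝ) : Set (ℝ × (Fin d → ℝ) × ℝ) :=
  { u | 0 ≤ u.2.2 + q ∧ nsq u.2.1 + c ^ 2 * u.1 ^ 2 ≤ (u.2.2 + q) ^ 2 }

lemma nsq_nonneg {d : ℕ} (v : Fin d → ℝ) : 0 ≤ nsq v :=
  Finset.sum_nonneg fun i _ => sq_nonneg (v i)

lemma nsq_smul {d : ℕ} (k : ℝ) (v : Fin d → ℝ) : nsq (fun j => k * v j) = k ^ 2 * nsq v := by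
  simp only [nsq, Finset.mul_sum, mul_pow]

lemma nsq_comb {d : ℕ} (a b : ℝ) (v w : Fin d → ℝ) :
    nsq (a • v + b • w) = a ^ 2 * nsq v + 2 * a * b * dotp v w + b ^ 2 * nsq w := by
  simp only [nsq, dotp, Finset.mul_sum, ← Finset.sum_add_distrib]
  refine Finset.sum_congr rfl fun i _ => ?_
  simp only [Pi.add_apply, Pi.smul_apply, smul_eq_mul]
  ring

lemma dotp_sq_le {d : ℕ} (v w : Fin d → ℝ) : dotp v w ^ 2 ≤ nsq v * nsq w :=
  Finset.sum_mul_sq_le_sq_mul_sq _ _ _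

lemma convex_coneSet (d : ℕ) (c q : ℝ) : Convex ℝ (coneSet d c q) := by
  rintro ⟨D₁, m₁, E₁⟩ ⟨h₁, k₁⟩ ⟨D₂, m₂, E₂⟩ ⟨h₂, k₂⟩ a b ha hb hab
  simp only at h₁ k₁ h₂ k₂
  have hq : a * E₁ + b * E₂ + q = a * (E₁ + q) + b * (E₂ + q) := by linear_combination -q * hab
  simp only [coneSet, Set.mem_ofPred_eq, Prod.fst_add, Prod.snd_add, Prod.smul_fst, Prod.smul_snd,
    smul_eq_mul, nsq_comb, hq]
  refine ⟨by positivity, ?_⟩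
  have hcs := dotp_sq_le m₁ m₂
  -- the mixed term of Cauchy–Schwarz for the vectors `(m₁, c D₁)` and `(m₂, c D₂)`
  have hmix : 0 ≤ (c * D₂) ^ 2 * nsq m₁ + 2 * (c * D₂) * (-(c * D₁)) * dotp m₁ m₂
      + (-(c * D₁)) ^ 2 * nsq m₂ := by
    rw [← nsq_comb]
    exact nsq_nonneg _
  have hcross : dotp m₁ m₂ + c ^ 2 * (D₁ * D₂) ≤ (E₁ + q) * (E₂ + q) := by
    refine abs_le_of_sq_le_sq' ?_ (mul_nonneg h₁ h₂) |>.2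
    calc (dotp m₁ m₂ + c ^ 2 * (D₁ * D₂)) ^ 2
        ≤ (nsq m₁ + c ^ 2 * D₁ ^ 2) * (nsq m₂ + c ^ 2 * D₂ ^ 2) := by nlinarith
      _ ≤ (E₁ + q) ^ 2 * (E₂ + q) ^ 2 :=
          mul_le_mul k₁ k₂ (add_nonneg (nsq_nonneg _) (by positivity)) (by positivity)
      _ = ((E₁ + q) * (E₂ + q)) ^ 2 := by ring
  have e1 := mul_le_mul_of_nonneg_left k₁ (sq_nonneg a)
  have e2 := mul_le_mul_of_nonneg_left k₂ (sq_nonneg b)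
  have e3 := mul_le_mul_of_nonneg_left hcross (by positivity : 0 ≤ 2 * a * b)
  nlinarith

/-! ### Lorentz factor -/

lemma nsq_lt_one {d : ℕ} {v : Fin d → ℝ} (hv : nrm v < 1) : nsq v < 1 := by
  rw [nrm, Real.sqrt_lt' one_pos] at hv
  simpa using hv

lemma gam_pos {d : ℕ} {v : Fin d → ℝ} (hv : nsq v < 1) : 0 < gam v :=
  one_div_pos.2 (Real.sqrt_pos.2 (by linarith))

lemma gam_sq {d : ℕ} {v : Fin d → ℝ} (hv : nsq v < 1) : gam v ^ 2 * (1 - nsq v) = 1 := by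
  have h : 0 < 1 - nsq v := by linarith
  rw [gam, div_pow, Real.sq_sqrt h.le]
  field_simp

lemma one_le_gam_sq {d : ℕ} {v : Fin d → ℝ} (hv : nsq v < 1) : 1 ≤ gam v ^ 2 := by
  nlinarith [gam_sq hv, nsq_nonneg v, sq_nonneg (gam v)]

/-! ### Equation of state -/

section EOS

variable {e : ℝ → ℝ}

lemma deriv_pos_of_synge (hpos : ∀ ξ : ℝ, 0 < ξ → 0 < e ξ)
    (hineq : ∀ ξ : ℝ, 0 < ξ → ξ / (e ξ + 1) < deriv e ξ) {ξ : ℝ} (hξ : 0 < ξ) :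
    0 < deriv e ξ :=
  lt_trans (div_pos hξ (by linarith [hpos ξ hξ])) (hineq ξ hξ)

lemma monotoneOn_Ioi_of_hasDerivAt {f f' : ℝ → ℝ} (hf : ∀ x, 0 < x → HasDerivAt f (f' x) x)
    (hf' : ∀ x, 0 < x → 0 ≤ f' x) : MonotoneOn f (Set.Ioi 0) := by
  refine monotoneOn_of_deriv_nonneg (convex_Ioi 0)
    (fun x hx => (hf x hx).continuousAt.continuousWithinAt) ?_ ?_
  · intro x hx
    rw [interior_Ioi] at hx
    exact (hf x hx).differentiableAt.differentiableWithinAt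
  · intro x hx
    rw [interior_Ioi] at hx
    rw [(hf x hx).deriv]
    exact hf' x hx

lemma synge_monotone (hdiff : ∀ ξ : ℝ, 0 < ξ → DifferentiableAt ℝ e ξ)
    (hpos : ∀ ξ : ℝ, 0 < ξ → 0 < e ξ)
    (hineq : ∀ ξ : ℝ, 0 < ξ → ξ / (e ξ + 1) < deriv e ξ) : MonotoneOn e (Set.Ioi 0) :=
  monotoneOn_Ioi_of_hasDerivAt (fun x hx => (hdiff x hx).hasDerivAt)
    fun _ hx => (deriv_pos_of_synge hpos hineq hx).le

/-- The integrated form of the Synge condition. -/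
lemma synge_sq_monotone (hdiff : ∀ ξ : ℝ, 0 < ξ → DifferentiableAt ℝ e ξ)
    (hpos : ∀ ξ : ℝ, 0 < ξ → 0 < e ξ)
    (hineq : ∀ ξ : ℝ, 0 < ξ → ξ / (e ξ + 1) < deriv e ξ) :
    MonotoneOn (fun ξ => (1 + e ξ) ^ 2 - ξ ^ 2) (Set.Ioi 0) := by
  refine monotoneOn_Ioi_of_hasDerivAt
    (f' := fun x => 2 * (1 + e x) * deriv e x - 2 * x) (fun x hx => ?_) (fun x hx => ?_)
  · have h := (((hdiff x hx).hasDerivAt.const_add 1).pow 2).sub ((hasDerivAt_id x).pow 2)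
    refine h.congr_deriv ?_
    simp
  · have h := hineq x hx
    rw [div_lt_iff₀ (by linarith [hpos x hx])] at h
    linarith

lemma hasDerivAt_Zfun (hdiff : ∀ ξ : ℝ, 0 < ξ → DifferentiableAt ℝ e ξ)
    (hpos : ∀ ξ : ℝ, 0 < ξ → 0 < e ξ)
    (hineq : ∀ ξ : ℝ, 0 < ξ → ξ / (e ξ + 1) < deriv e ξ) {θ : ℝ} (hθ : 0 < θ) :
    HasDerivAt (Zfun e) (deriv e θ / θ) θ := by
  set G : ℝ → ℝ := fun x => e x / x + ∫ ξ in (1:ℝ)..x, e ξ / ξ ^ 2 with hG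
  have hcont : ∀ x : ℝ, 0 < x → ContinuousAt (fun ξ => e ξ / ξ ^ 2) x := fun x hx =>
    (hdiff x hx).continuousAt.div (continuousAt_id.pow 2) (by simpa using hx.ne')
  have hcontOn : ContinuousOn (fun ξ => e ξ / ξ ^ 2) (Set.Ioi 0) :=
    fun x hx => (hcont x hx).continuousWithinAt
  have hsub : ∀ x : ℝ, 0 < x → Set.uIcc 1 x ⊆ Set.Ioi 0 := fun x hx y hy =>
    lt_of_lt_of_le (lt_min one_pos hx) hy.1
  have hGd : ∀ x : ℝ, 0 < x → HasDerivAt G (deriv e x / x) x := by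
    intro x hx
    have h1 := ((hdiff x hx).hasDerivAt).div (hasDerivAt_id x) hx.ne'
    have h2 : HasDerivAt (fun u => ∫ ξ in (1:ℝ)..u, e ξ / ξ ^ 2) (e x / x ^ 2) x :=
      intervalIntegral.integral_hasDerivAt_right
        ((hcontOn.mono (hsub x hx)).intervalIntegrable)
        (hcontOn.stronglyMeasurableAtFilter isOpen_Ioi x hx) (hcont x hx)
    refine (h1.add h2).congr_deriv ?_
    have := hx.ne'
    simp only [id]
    field_simp
    ring
  have hZG : ∀ x : ℝ, 0 < x → Zfun e x = G x - G 1 := by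
    intro x hx
    refine intervalIntegral.integral_eq_sub_of_hasDerivAt
      (fun y hy => hGd y (hsub x hx hy)) ?_
    -- a nonnegative derivative is integrable, without any continuity assumption
    refine intervalIntegral.intervalIntegrable_deriv_of_nonneg
      (fun y hy => (hGd y (hsub x hx hy)).continuousAt.continuousWithinAt)
      (fun y hy => hGd y (hsub x hx (Set.Ioo_subset_Icc_self hy))) (fun y hy => ?_)
    have hy0 : 0 < y := hsub x hx (Set.Ioo_subset_Icc_self hy)
    exact div_nonneg (deriv_pos_of_synge hpos hineq hy0).le hy0.le
  refine ((hGd θ hθ).sub_const (G 1)).congr_of_eventuallyEq ?_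
  filter_upwards [Ioi_mem_nhds hθ] with x hx using hZG x hx

lemma hfun_pos (hpos : ∀ ξ : ℝ, 0 < ξ → 0 < e ξ) {θ : ℝ} (hθ : 0 < θ) : 0 < hfun e θ := by
  have := hpos θ hθ
  unfold hfun
  linarith

lemma hasDerivAt_hfun (hdiff : ∀ ξ : ℝ, 0 < ξ → DifferentiableAt ℝ e ξ) {θ : ℝ} (hθ : 0 < θ) :
    HasDerivAt (hfun e) (1 + deriv e θ) θ :=
  ((hasDerivAt_id θ).const_add 1).add (hdiff θ hθ).hasDerivAt

/-- Along an isentrope, the ratio of density to specific enthalpy increases with `θ`. -/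
lemma density_div_enthalpy_monotone (hdiff : ∀ ξ : ℝ, 0 < ξ → DifferentiableAt ℝ e ξ)
    (hpos : ∀ ξ : ℝ, 0 < ξ → 0 < e ξ)
    (hineq : ∀ ξ : ℝ, 0 < ξ → ξ / (e ξ + 1) < deriv e ξ) :
    MonotoneOn (fun t => Real.exp (Zfun e t) / hfun e t) (Set.Ioi 0) := by
  refine monotoneOn_Ioi_of_hasDerivAt (fun x hx => ((hasDerivAt_Zfun hdiff hpos hineq hx).exp.div
    (hasDerivAt_hfun hdiff hx) (hfun_pos hpos hx).ne')) (fun x hx => ?_)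
  have h := hineq x hx
  rw [div_lt_iff₀ (by linarith [hpos x hx])] at h
  refine div_nonneg ?_ (sq_nonneg _)
  have key : 1 + deriv e x ≤ deriv e x / x * hfun e x := by
    rw [div_mul_eq_mul_div, le_div_iff₀ hx, hfun]
    nlinarith
  nlinarith [mul_le_mul_of_nonneg_left key (Real.exp_pos (Zfun e x)).le]

/-- Comparison of two states `θ`, `t` on one isentrope: integrating `dp = ρ dh = (ρ/h) h dh` with
`ρ/h` increasing gives `p(t) - p(θ) ≥ (ρ(θ)/h(θ)) (h(t)² - h(θ)²)/2`. -/
lemma isentrope_ineq (hdiff : ∀ ξ : ℝ, 0 < ξ → DifferentiableAt ℝ e ξ)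
    (hpos : ∀ ξ : ℝ, 0 < ξ → 0 < e ξ)
    (hineq : ∀ ξ : ℝ, 0 < ξ → ξ / (e ξ + 1) < deriv e ξ) {θ t : ℝ} (hθ : 0 < θ) (ht : 0 < t) :
    Real.exp (Zfun e θ) * (hfun e t ^ 2 - hfun e θ ^ 2) ≤
      2 * hfun e θ * (t * Real.exp (Zfun e t) - θ * Real.exp (Zfun e θ)) := by
  set k := Real.exp (Zfun e θ) / hfun e θ with hk
  have hhθ := hfun_pos hpos hθ
  set ψ : ℝ → ℝ := fun x => x * Real.exp (Zfun e x) - k / 2 * hfun e x ^ 2 with hψ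
  have hψd : ∀ x : ℝ, 0 < x →
      HasDerivAt ψ ((1 + deriv e x) * (Real.exp (Zfun e x) - k * hfun e x)) x := by
    intro x hx
    have h := ((hasDerivAt_id x).mul (hasDerivAt_Zfun hdiff hpos hineq hx).exp).sub
      (((hasDerivAt_hfun hdiff hx).pow 2).const_mul (k / 2))
    refine h.congr_deriv ?_
    have := hx.ne'
    simp only [id]
    field_simp
    push_cast
    ring
  have hmono := density_div_enthalpy_monotone hdiff hpos hineq
  have hmin : ψ θ ≤ ψ t := by
    rcases le_total θ t with hle | hle
    · have hI : ∀ x ∈ Set.Icc θ t, 0 < x := fun x hx => hθ.trans_le hx.1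
      refine monotoneOn_of_deriv_nonneg (convex_Icc θ t)
        (fun x hx => (hψd x (hI x hx)).continuousAt.continuousWithinAt)
        (fun x hx => (hψd x (hI x (interior_subset hx))).differentiableAt.differentiableWithinAt)
        (fun x hx => ?_) (Set.left_mem_Icc.2 hle) (Set.right_mem_Icc.2 hle) hle
      have hx' := interior_subset hx
      have hx0 := hI x hx'
      rw [(hψd x hx0).deriv]
      have h1 : k ≤ Real.exp (Zfun e x) / hfun e x := hmono hθ hx0 hx'.1
      rw [le_div_iff₀ (hfun_pos hpos hx0)] at h1
      exact mul_nonneg (by linarith [deriv_pos_of_synge hpos hineq hx0]) (by linarith)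
    · have hI : ∀ x ∈ Set.Icc t θ, 0 < x := fun x hx => ht.trans_le hx.1
      refine antitoneOn_of_deriv_nonpos (convex_Icc t θ)
        (fun x hx => (hψd x (hI x hx)).continuousAt.continuousWithinAt)
        (fun x hx => (hψd x (hI x (interior_subset hx))).differentiableAt.differentiableWithinAt)
        (fun x hx => ?_) (Set.left_mem_Icc.2 hle) (Set.right_mem_Icc.2 hle) hle
      have hx' := interior_subset hx
      have hx0 := hI x hx'
      rw [(hψd x hx0).deriv]
      have h1 : Real.exp (Zfun e x) / hfun e x ≤ k := hmono hx0 hθ hx'.2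
      rw [div_le_iff₀ (hfun_pos hpos hx0)] at h1
      exact mul_nonpos_of_nonneg_of_nonpos
        (by linarith [deriv_pos_of_synge hpos hineq hx0]) (by linarith)
  have hkh : k * hfun e θ = Real.exp (Zfun e θ) := div_mul_cancel₀ _ hhθ.ne'
  have := mul_le_mul_of_nonneg_left hmin (by positivity : 0 ≤ 2 * hfun e θ)
  simp only [hψ] at this
  rw [← hkh] at this ⊢
  linarith

/-! ### Physical states and cones -/

lemma Uvec_mem_entropy_cone (hdiff : ∀ ξ : ℝ, 0 < ξ → DifferentiableAt ℝ e ξ)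
    (hpos : ∀ ξ : ℝ, 0 < ξ → 0 < e ξ)
    (hineq : ∀ ξ : ℝ, 0 < ξ → ξ / (e ξ + 1) < deriv e ξ) {d : ℕ} {σ ρ θ t : ℝ}
    {v : Fin d → ℝ} (hρ : 0 < ρ) (hθ : 0 < θ) (hv : nsq v < 1)
    (hσ : σ ≤ -Real.log ρ + Zfun e θ) (ht : 0 < t) :
    Uvec e ρ v θ ∈ coneSet d (hfun e t) (pstar e σ t) := by
  have hA := isentrope_ineq hdiff hpos hineq hθ ht
  have hh := hfun_pos hpos hθ
  have hhθ : θ ≤ hfun e θ := by have := hpos θ hθ; unfold hfun; linarith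
  have hP : 0 < pstar e σ t := mul_pos ht (Real.exp_pos _)
  have hG := gam_sq hv
  have hG1 := one_le_gam_sq hv
  -- the density with entropy exactly `σ` at `θ`, which bounds `ρ` from above
  set r := Real.exp (Zfun e θ - σ) with hr
  have hρr : ρ ≤ r := by
    rw [hr, ← Real.log_le_iff_le_exp hρ]
    linarith
  have hB : r * (hfun e t ^ 2 - hfun e θ ^ 2 + 2 * hfun e θ * θ) ≤
      2 * hfun e θ * pstar e σ t := by
    have := mul_le_mul_of_nonneg_right hA (Real.exp_pos (-σ)).le
    have h1 : r = Real.exp (Zfun e θ) * Real.exp (-σ) := by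
      rw [hr, ← Real.exp_add, sub_eq_add_neg]
    have h2 : pstar e σ t = t * (Real.exp (Zfun e t) * Real.exp (-σ)) := by
      rw [pstar, ← Real.exp_add, sub_eq_add_neg]
    rw [h1, h2]
    linarith
  have hBρ : ρ * (hfun e t ^ 2 - hfun e θ ^ 2 + 2 * hfun e θ * θ) ≤
      2 * hfun e θ * pstar e σ t := by
    rcases le_total 0 (hfun e t ^ 2 - hfun e θ ^ 2 + 2 * hfun e θ * θ) with h0 | h0
    · exact (mul_le_mul_of_nonneg_right hρr h0).trans hB
    · exact (mul_nonpos_of_nonneg_of_nonpos hρ.le h0).trans (by positivity)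
  simp only [coneSet, Uvec, Set.mem_ofPred_eq, nsq_smul]
  generalize pstar e σ t = P at *
  generalize hfun e t = H at *
  generalize hfun e θ = h at *
  generalize gam v = g at *
  generalize nsq v = V at *
  constructor
  · have h1 : h * 1 ≤ h * g ^ 2 := mul_le_mul_of_nonneg_left hG1 hh.le
    have h2 : ρ * θ ≤ ρ * (h * g ^ 2) := mul_le_mul_of_nonneg_left (by linarith) hρ.le
    linarith
  · have h1 := mul_le_mul_of_nonneg_left hBρ (by positivity : 0 ≤ g ^ 2 * ρ)
    have hGV : g ^ 2 * V = g ^ 2 - 1 := by linarith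
    have h2 : (ρ * h * g ^ 2) ^ 2 * V = ρ ^ 2 * h ^ 2 * g ^ 2 * (g ^ 2 - 1) := by
      rw [← hGV]; ring
    rw [h2]
    linarith [sq_nonneg (P - ρ * θ)]

/-- Converse of `Uvec_mem_entropy_cone`: the cone attached to the state's own `θ` already yields
the entropy bound. -/
lemma entropy_of_mem_cone (hpos : ∀ ξ : ℝ, 0 < ξ → 0 < e ξ) {d : ℕ} {σ ρ θ : ℝ}
    {v : Fin d → ℝ} (hρ : 0 < ρ) (hθ : 0 < θ) (hv : nsq v < 1)
    (hmem : Uvec e ρ v θ ∈ coneSet d (hfun e θ) (pstar e σ θ)) :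
    σ ≤ -Real.log ρ + Zfun e θ := by
  have hh := hfun_pos hpos hθ
  have hG := gam_sq hv
  have hg := gam_pos hv
  simp only [coneSet, Uvec, Set.mem_ofPred_eq, nsq_smul] at hmem
  obtain ⟨h0, h1⟩ := hmem
  have hGV : gam v ^ 2 * nsq v = gam v ^ 2 - 1 := by linarith
  have h2 : (ρ * hfun e θ * gam v ^ 2) ^ 2 * nsq v =
      ρ ^ 2 * hfun e θ ^ 2 * gam v ^ 2 * (gam v ^ 2 - 1) := by
    rw [← hGV]; ring
  rw [h2] at h1
  have hX : 0 < ρ * hfun e θ * gam v ^ 2 := by positivity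
  have h3 : 0 ≤ (2 * (ρ * hfun e θ * gam v ^ 2) - ρ * θ + pstar e σ θ) *
      (pstar e σ θ - ρ * θ) := by
    linarith
  have h4 : 0 ≤ pstar e σ θ - ρ * θ := nonneg_of_mul_nonneg_right h3 (by linarith)
  have h5 : ρ ≤ Real.exp (Zfun e θ - σ) := by
    refine le_of_mul_le_mul_right ?_ hθ
    rw [pstar] at h4
    linarith
  rw [← Real.log_le_iff_le_exp hρ] at h5
  linarith

lemma Uvec_mem_cone (hdiff : ∀ ξ : ℝ, 0 < ξ → DifferentiableAt ℝ e ξ)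
    (hpos : ∀ ξ : ℝ, 0 < ξ → 0 < e ξ)
    (hineq : ∀ ξ : ℝ, 0 < ξ → ξ / (e ξ + 1) < deriv e ξ) {d : ℕ} {ρ θ δ : ℝ}
    {v : Fin d → ℝ} (hρ : 0 < ρ) (hθ : 0 < θ) (hv : nsq v < 1) (hδ : 0 < δ)
    (hδθ : δ ≤ θ / gam v) :
    Uvec e ρ v θ ∈ coneSet d (1 + e δ) 0 := by
  have hh := hfun_pos hpos hθ
  have he := hpos θ hθ
  have hG := gam_sq hv
  have hG1 := one_le_gam_sq hv
  have hg := gam_pos hv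
  rw [le_div_iff₀ hg] at hδθ
  have hg1 : 1 ≤ gam v := by nlinarith
  have hle : δ ≤ θ := by nlinarith
  have hmono : (1 + e δ) ^ 2 - δ ^ 2 ≤ (1 + e θ) ^ 2 - θ ^ 2 :=
    synge_sq_monotone hdiff hpos hineq hδ hθ hle
  have hsq : (δ * gam v) ^ 2 ≤ θ ^ 2 := pow_le_pow_left₀ (by positivity) hδθ 2
  have hhe : hfun e θ = 1 + θ + e θ := rfl
  simp only [coneSet, Uvec, Set.mem_ofPred_eq, nsq_smul]
  generalize hfun e θ = h at *
  generalize gam v = g at *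
  generalize nsq v = V at *
  constructor
  · have h1 : h * 1 ≤ h * g ^ 2 := mul_le_mul_of_nonneg_left hG1 hh.le
    have h2 : ρ * θ ≤ ρ * (h * g ^ 2) := mul_le_mul_of_nonneg_left (by linarith) hρ.le
    linarith
  · have hGV : g ^ 2 * V = g ^ 2 - 1 := by linarith
    have h2 : (ρ * h * g ^ 2) ^ 2 * V = ρ ^ 2 * h ^ 2 * g ^ 2 * (g ^ 2 - 1) := by
      rw [← hGV]; ring
    rw [h2]
    have h3 := mul_le_mul_of_nonneg_left hmono (by positivity : 0 ≤ ρ ^ 2 * g ^ 2)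
    have h4 := mul_le_mul_of_nonneg_left hsq (sq_nonneg ρ)
    subst hhe
    linarith

/-- Recovery of primitive variables. For a trial pressure `p`, momentum conservation forces
`v = m / (E + p)` and `ρ = D √(1 - |v|²)`; the remaining equation
`E - |m|²/(E + p) = ρ (1 + e(p/ρ))` is solved by the intermediate value theorem. -/
lemma exists_primitive (hdiff : ∀ ξ : ℝ, 0 < ξ → DifferentiableAt ℝ e ξ)
    (hpos : ∀ ξ : ℝ, 0 < ξ → 0 < e ξ)
    (hineq : ∀ ξ : ℝ, 0 < ξ → ξ / (e ξ + 1) < deriv e ξ) {d : ℕ} {D E δ : ℝ}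
    {m : Fin d → ℝ} (hD : 0 < D) (hE : 0 < E) (hδ : 0 < δ)
    (hmem : (D, m, E) ∈ coneSet d (1 + e δ) 0) :
    ∃ ρ θ : ℝ, ∃ v : Fin d → ℝ, 0 < ρ ∧ 0 < θ ∧ nrm v < 1 ∧ (D, m, E) = Uvec e ρ v θ := by
  have hc : 0 < 1 + e δ := by linarith [hpos δ hδ]
  have hN0 := nsq_nonneg m
  obtain ⟨-, hN⟩ := hmem
  simp only [add_zero] at hN
  set N := nsq m with hNdef
  have hNE : N < E ^ 2 := by
    have : 0 < (1 + e δ) ^ 2 * D ^ 2 := by positivity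
    linarith
  have hw : ∀ p : ℝ, 0 ≤ p → 0 < E + p := fun p hp => by linarith
  have hNw : ∀ p : ℝ, 0 ≤ p → N < (E + p) ^ 2 := fun p hp => by nlinarith
  set s : ℝ → ℝ := fun p => Real.sqrt (1 - N / (E + p) ^ 2) with hs
  have hs0 : ∀ p : ℝ, 0 ≤ p → 0 < 1 - N / (E + p) ^ 2 := fun p hp => by
    have := (div_lt_one (pow_pos (hw p hp) 2)).2 (hNw p hp)
    linarith
  have hspos : ∀ p : ℝ, 0 ≤ p → 0 < s p := fun p hp => Real.sqrt_pos.2 (hs0 p hp)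
  have hssq : ∀ p : ℝ, 0 ≤ p → s p ^ 2 = 1 - N / (E + p) ^ 2 := fun p hp =>
    Real.sq_sqrt (hs0 p hp).le
  have hs1 : ∀ p : ℝ, 0 ≤ p → s p ≤ 1 := fun p hp => by
    have : 0 ≤ N / (E + p) ^ 2 := by positivity
    exact Real.sqrt_le_one.2 (by linarith)
  have hsmono : ∀ p : ℝ, 0 ≤ p → s 0 ≤ s p := fun p hp => by
    refine Real.sqrt_le_sqrt (sub_le_sub_left ?_ 1)
    refine div_le_div_of_nonneg_left hN0 (by positivity) ?_
    exact pow_le_pow_left₀ (by linarith) (by linarith) 2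
  set F : ℝ → ℝ := fun p => E - N / (E + p) - D * s p * (1 + e (p / (D * s p))) with hF
  -- the trial pressure `δ ρ(0)` keeps `p / ρ(p) ≤ δ`
  set p₀ := δ * (D * s 0) with hp₀
  have hp₀pos : 0 < p₀ := mul_pos hδ (mul_pos hD (hspos 0 le_rfl))
  set p₁ := E + D * δ with hp₁
  have hp₁pos : 0 < p₁ := by positivity
  have hp01 : p₀ ≤ p₁ := by
    have : δ * (D * s 0) ≤ δ * (D * 1) := by gcongr; exact hs1 0 le_rfl
    linarith
  have hF0 : 0 ≤ F p₀ := by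
    have hsp := hspos p₀ hp₀pos.le
    have hρ : 0 < D * s p₀ := mul_pos hD hsp
    have hle : e (p₀ / (D * s p₀)) ≤ e δ := by
      refine synge_monotone hdiff hpos hineq (div_pos hp₀pos hρ) hδ ?_
      rw [div_le_iff₀ hρ, hp₀]
      have := hsmono p₀ hp₀pos.le
      gcongr
    have hle2 : D * s p₀ * (1 + e (p₀ / (D * s p₀))) ≤ D * s p₀ * (1 + e δ) := by gcongr
    have hwp := hw p₀ hp₀pos.le
    -- reverse Cauchy–Schwarz in Minkowski space for `(E, m)` and `(E + p₀, m)`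
    have hrev : D * s p₀ * (1 + e δ) ≤ E - N / (E + p₀) := by
      have hrhs : E - N / (E + p₀) = (E * (E + p₀) - N) / (E + p₀) := by field_simp
      have hnn : 0 ≤ E - N / (E + p₀) := by
        rw [hrhs]
        refine div_nonneg ?_ hwp.le
        nlinarith
      refine abs_le_of_sq_le_sq' ?_ hnn |>.2
      have h1 : (D * s p₀ * (1 + e δ)) ^ 2 = ((1 + e δ) ^ 2 * D ^ 2) * s p₀ ^ 2 := by ring
      have h2 : ((1 + e δ) ^ 2 * D ^ 2) * s p₀ ^ 2 ≤ (E ^ 2 - N) * s p₀ ^ 2 :=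
        mul_le_mul_of_nonneg_right (by linarith) (sq_nonneg _)
      rw [h1]
      refine h2.trans ?_
      have hx : (1 - N / (E + p₀) ^ 2) * (E + p₀) ^ 2 = (E + p₀) ^ 2 - N := by field_simp
      rw [hssq p₀ hp₀pos.le, hrhs, div_pow, le_div_iff₀ (by positivity), mul_assoc, hx]
      nlinarith [mul_nonneg hN0 (sq_nonneg p₀)]
    simp only [hF]
    linarith
  have hF1 : F p₁ ≤ 0 := by
    have hsp := hspos p₁ hp₁pos.le
    have hρ : 0 < D * s p₁ := mul_pos hD hsp
    have hρD : D * s p₁ ≤ D := by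
      have := mul_le_mul_of_nonneg_left (hs1 p₁ hp₁pos.le) hD.le
      linarith
    set ρ := D * s p₁ with hρdef
    have hθ : 0 < p₁ / ρ := div_pos hp₁pos hρ
    have hδle : δ ≤ p₁ / ρ := by
      rw [le_div_iff₀ hρ, hp₁]
      nlinarith
    have hmono : (1 + e δ) ^ 2 - δ ^ 2 ≤ (1 + e (p₁ / ρ)) ^ 2 - (p₁ / ρ) ^ 2 :=
      synge_sq_monotone hdiff hpos hineq hδ hθ hδle
    have he := hpos _ hθ
    have hbig : E ≤ ρ * (1 + e (p₁ / ρ)) := by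
      refine abs_le_of_sq_le_sq' ?_ (by positivity) |>.2
      have h1 := mul_le_mul_of_nonneg_left hmono (sq_nonneg ρ)
      have h2 : ρ ^ 2 * (p₁ / ρ) ^ 2 = p₁ ^ 2 := by field_simp
      have h3 : ρ ^ 2 * δ ^ 2 ≤ D ^ 2 * δ ^ 2 := by gcongr
      have h4 : p₁ ^ 2 = E ^ 2 + 2 * E * (D * δ) + D ^ 2 * δ ^ 2 := by rw [hp₁]; ring
      have h5 : 0 ≤ 2 * E * (D * δ) := by positivity
      have h6 : 0 ≤ ρ ^ 2 * (1 + e δ) ^ 2 := by positivity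
      rw [mul_pow]
      linarith
    have : 0 ≤ N / (E + p₁) := div_nonneg hN0 (hw p₁ hp₁pos.le).le
    simp only [hF]
    linarith
  have hFc : ContinuousOn F (Set.Icc p₀ p₁) := by
    intro p hp
    have hp0 : 0 < p := hp₀pos.trans_le hp.1
    have hwp := (hw p hp0.le).ne'
    have hρ : 0 < D * s p := mul_pos hD (hspos p hp0.le)
    have hsc : ContinuousAt s p := by
      refine ContinuousAt.sqrt (continuousAt_const.sub (continuousAt_const.div ?_ (by positivity)))
      exact (continuousAt_const.add continuousAt_id).pow 2
    have hρc : ContinuousAt (fun p => D * s p) p := continuousAt_const.mul hsc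
    have hθc : ContinuousAt (fun p => p / (D * s p)) p := continuousAt_id.div hρc hρ.ne'
    have hec : ContinuousAt (fun p => e (p / (D * s p))) p :=
      ContinuousAt.comp (f := fun p => p / (D * s p)) (g := e)
        (hdiff _ (div_pos hp0 hρ)).continuousAt hθc
    refine ContinuousAt.continuousWithinAt ?_
    refine (continuousAt_const.sub (continuousAt_const.div ?_ hwp)).sub
      (hρc.mul (continuousAt_const.add hec))
    exact continuousAt_const.add continuousAt_id
  obtain ⟨p, hp, hFp⟩ := intermediate_value_Icc' hp01 hFc ⟨hF1, hF0⟩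
  have hp0 : 0 < p := hp₀pos.trans_le hp.1
  have hwp := hw p hp0.le
  have hsp := hspos p hp0.le
  have hρ : 0 < D * s p := mul_pos hD hsp
  have hnv : nsq (fun j => (E + p)⁻¹ * m j) = N / (E + p) ^ 2 := by
    rw [nsq_smul, inv_pow, div_eq_inv_mul]
  have hgam : gam (fun j => (E + p)⁻¹ * m j) = 1 / s p := by rw [gam, hnv]
  have hmom : D * s p * hfun e (p / (D * s p)) * (1 / s p) ^ 2 = E + p := by
    have h1 : D * s p * hfun e (p / (D * s p)) = (E + p) * s p ^ 2 := by
      have h2 : D * s p * (p / (D * s p)) = p := mul_div_cancel₀ _ hρ.ne'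
      have h3 : (E + p) * (1 - N / (E + p) ^ 2) = E + p - N / (E + p) := by field_simp
      rw [hssq p hp0.le, h3, hfun]
      simp only [hF] at hFp
      linarith
    rw [h1]
    field_simp
  refine ⟨D * s p, p / (D * s p), fun j => (E + p)⁻¹ * m j, hρ, div_pos hp0 hρ, ?_, ?_⟩
  · rw [nrm, Real.sqrt_lt' one_pos, hnv]
    linarith [hs0 p hp0.le]
  · rw [Uvec, hgam, hmom]
    refine Prod.ext ?_ (Prod.ext ?_ ?_)
    · simp only
      field_simp
    · funext j
      simp only
      field_simp
    · simp only
      rw [mul_div_cancel₀ _ hρ.ne']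
      ring

end EOS

/-- Let `e` be a Synge-type EOS and `d ≥ 1`. For any `σ ∈ ℝ`,
the set `Ω_σ ⊆ ℝ^{d+2}` is convex. -/
theorem minimum_entropy_stmt9 (e : ℝ → ℝ)
    (hdiff : ∀ ξ : ℝ, 0 < ξ → DifferentiableAt ℝ e ξ)
    (hpos : ∀ ξ : ℝ, 0 < ξ → 0 < e ξ)
    (hineq : ∀ ξ : ℝ, 0 < ξ → ξ / (e ξ + 1) < deriv e ξ)
    (d : ℕ) (hd : 1 ≤ d) (σ : ℝ) :
    Convex ℝ (OmegaSet e d σ) := by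
  rintro _ ⟨ρ₁, θ₁, v₁, hρ₁, hθ₁, hv₁, hσ₁, rfl⟩ _ ⟨ρ₂, θ₂, v₂, hρ₂, hθ₂, hv₂, hσ₂, rfl⟩ a b
    ha hb hab
  replace hv₁ := nsq_lt_one hv₁
  replace hv₂ := nsq_lt_one hv₂
  have hδ₁ := div_pos hθ₁ (gam_pos hv₁)
  have hδ₂ := div_pos hθ₂ (gam_pos hv₂)
  set δ := min (θ₁ / gam v₁) (θ₂ / gam v₂) with hδdef
  have hδ : 0 < δ := lt_min hδ₁ hδ₂
  have hphys := convex_coneSet d (1 + e δ) 0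
    (Uvec_mem_cone hdiff hpos hineq hρ₁ hθ₁ hv₁ hδ (min_le_left _ _))
    (Uvec_mem_cone hdiff hpos hineq hρ₂ hθ₂ hv₂ hδ (min_le_right _ _)) ha hb hab
  have hent : ∀ t, 0 < t → a • Uvec e ρ₁ v₁ θ₁ + b • Uvec e ρ₂ v₂ θ₂ ∈
      coneSet d (hfun e t) (pstar e σ t) := fun t ht =>
    convex_coneSet d (hfun e t) (pstar e σ t)
      (Uvec_mem_entropy_cone hdiff hpos hineq hρ₁ hθ₁ hv₁ hσ₁ ht)
      (Uvec_mem_entropy_cone hdiff hpos hineq hρ₂ hθ₂ hv₂ hσ₂ ht) ha hb hab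
  have hD : 0 < (a • Uvec e ρ₁ v₁ θ₁ + b • Uvec e ρ₂ v₂ θ₂).1 :=
    convex_Ioi (0 : ℝ) (mul_pos hρ₁ (gam_pos hv₁)) (mul_pos hρ₂ (gam_pos hv₂)) ha hb hab
  generalize a • Uvec e ρ₁ v₁ θ₁ + b • Uvec e ρ₂ v₂ θ₂ = u at *
  obtain ⟨D, m, E⟩ := u
  -- the cone and `D > 0` rule out `E = 0`
  have hE : 0 < E := by
    obtain ⟨h0, h1⟩ := hphys
    simp only [add_zero] at h0 h1 hD
    refine lt_of_le_of_ne h0 fun h => ?_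
    have hc : 0 < 1 + e δ := by linarith [hpos δ hδ]
    have : 0 < (1 + e δ) ^ 2 * D ^ 2 := by positivity
    rw [← h] at h1
    linarith [nsq_nonneg m]
  obtain ⟨ρ, θ, v, hρ, hθ, hv, hu⟩ := exists_primitive hdiff hpos hineq hD hE hδ hphys
  refine ⟨ρ, θ, v, hρ, hθ, hv, ?_, hu⟩
  have := hent θ hθ
  rw [hu] at this
  exact entropy_of_mem_cone hpos hρ hθ (nsq_lt_one hv) this
end
end

section
/- Let e : (0,∞) → ℝ be a Synge-type EOS, d = 1, and σ ∈ ℝ. Let (ρ_k, v_k, θ_k), k ∈ {−1, 0, 1}, be three primitive states, each with ρ_k > 0, θ_k > 0, |v_k| < 1, and −ln ρ_k + Z(θ_k) ≥ σ; set U_k = U(ρ_k,v_k,θ_k) ∈ ℝ³ and F_k = F_1(ρ_k,v_k,θ_k) ∈ ℝ³. Let 0 < λ ≤ 1 (i.e., Δt ≤ Δx with wave-speed bound α = 1) and define the Lax–Friedrichs updates F̂(U,U',F,F') = ½(F + F' + U − U') and U⁺ = U_0 − λ·(F̂(U_0,U_1,F_0,F_1) − F̂(U_{−1},U_0,F_{−1},F_0)).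 Then U⁺ ∈ Ω_σ. -/
/-!
With wave-speed bound `1`, the update is the combination
`U⁺ = (1 - λ) U₀ + (λ/2) (U₁ - F₁) + (λ/2) (U₋₁ + F₋₁)`, and `U = ½ (U + F) + ½ (U - F)`, so
everything reduces to the null vectors `U + s F`, `s = ±1`. Two properties of vectors
`(D, m, E)`, both stable under such combinations, together imply membership in `Ω_σ`.

* A cone condition `K D² ≤ (E + m) (E - m)` with `K = (1 + e(θ₀))² - θ₀²` for some `θ₀ > 0`
  (`Cone`). On a null vector one has `(E + m) (E - m) = D² ((1 + e(θ))² - θ²)`, and the Synge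
  condition says exactly that `(1 + e)² - θ²` is increasing. The cone condition implies that
  primitive variables exist, by the intermediate value theorem in the pressure (`exists_prim`).
* The affine inequalities `E - m v* - D h(θ*) √(1 - v*²) + ρ* θ* ≥ 0` for all `|v*| < 1`, `θ* > 0`,
  where `ρ* = exp (Z(θ*) - σ)` is the density of entropy `σ` at temperature `θ*`. Taking for
  `(v*, θ*)` the velocity and temperature of the vector itself gives `ρ ≤ ρ*`, i.e. `S ≥ σ`.

For a null vector the affine inequality, with `ρ* θ*` weighted by `1 + s v*`, reduces by AM-GM in
the Doppler factor `γ (1 + s v)` to `h (h - 2θ) - h*² + 2 h θ* exp (Z* - Z) ≥ 0`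
(`Synge.isentrope_ineq`). As a function of `θ*` the left-hand side has its minimum `0` at
`θ* = θ`, because `h exp (-Z)` is decreasing, which is again the Synge condition.
-/

open scoped BigOperators

noncomputable section

/-- Lorentz factor `γ = (1 − v²)^{−1/2}` for a scalar velocity. -/
def gam1 (v : ℝ) : ℝ := 1 / Real.sqrt (1 - v ^ 2)

/-- Conservative vector `U(ρ,v,θ) = (ργ, ρh(θ)γ²v, ρh(θ)γ² − p) ∈ ℝ³` with `p = ρθ` (d = 1). -/
def U1 (e : ℝ → ℝ) (ρ v θ : ℝ) : ℝ × ℝ × ℝ :=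
  (ρ * gam1 v, ρ * hfun e θ * (gam1 v) ^ 2 * v, ρ * hfun e θ * (gam1 v) ^ 2 - ρ * θ)

/-- Flux `F₁(ρ,v,θ) = (ργv, ρh(θ)γ²v² + p, ρh(θ)γ²v) ∈ ℝ³` with `p = ρθ` (d = 1). -/
def F1s (e : ℝ → ℝ) (ρ v θ : ℝ) : ℝ × ℝ × ℝ :=
  (ρ * gam1 v * v, ρ * hfun e θ * (gam1 v) ^ 2 * v ^ 2 + ρ * θ,
   ρ * hfun e θ * (gam1 v) ^ 2 * v)

/-- The admissible set `Ω_σ ⊆ ℝ³` (d = 1). -/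
def Omega1 (e : ℝ → ℝ) (σ : ℝ) : Set (ℝ × ℝ × ℝ) :=
  { u | ∃ ρ v θ : ℝ, 0 < ρ ∧ 0 < θ ∧ |v| < 1 ∧
        σ ≤ -Real.log ρ + Zfun e θ ∧ u = U1 e ρ v θ }

/-- Lax–Friedrichs numerical flux with wave-speed bound `α = 1`:
`F̂(U,U',F,F') = ½(F + F' + U − U')`. -/
def LFflux (U U' F F' : ℝ × ℝ × ℝ) : ℝ × ℝ × ℝ := ((1:ℝ) / 2) • (F + F' + U - U')

open Set

/-! ### Thermodynamics of Synge-type equations of state -/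

/-- The Synge-type equations of state. -/
structure Synge (e : ℝ → ℝ) : Prop where
  diff : ∀ ξ : ℝ, 0 < ξ → DifferentiableAt ℝ e ξ
  pos : ∀ ξ : ℝ, 0 < ξ → 0 < e ξ
  ineq : ∀ ξ : ℝ, 0 < ξ → ξ / (e ξ + 1) < deriv e ξ

namespace Synge

variable {e : ℝ → ℝ}

lemma deriv_pos (H : Synge e) {x : ℝ} (hx : 0 < x) : 0 < deriv e x :=
  lt_trans (div_pos hx (by linarith [H.pos x hx])) (H.ineq x hx)

lemma ineq' (H : Synge e) {x : ℝ} (hx : 0 < x) : x < deriv e x * (e x + 1) :=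
  (div_lt_iff₀ (by linarith [H.pos x hx])).1 (H.ineq x hx)

lemma hasDerivAt (H : Synge e) {x : ℝ} (hx : 0 < x) : HasDerivAt e (deriv e x) x :=
  (H.diff x hx).hasDerivAt

lemma continuousOn (H : Synge e) : ContinuousOn e (Ioi 0) :=
  fun x hx => (H.diff x hx).continuousAt.continuousWithinAt

lemma mono (H : Synge e) {x y : ℝ} (hx : 0 < x) (hxy : x ≤ y) : e x ≤ e y := by
  refine monotoneOn_of_deriv_nonneg (convex_Ioi 0) H.continuousOn ?_ ?_ hx (hx.trans_le hxy) hxy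
  · rw [interior_Ioi]
    exact fun x hx => (H.diff x hx).differentiableWithinAt
  · rw [interior_Ioi]
    exact fun x hx => (H.deriv_pos hx).le

/-- Since `e'` need not be continuous, the derivative of `Z` is read off the integrated-by-parts
form `Z(θ) = e(θ)/θ - e(1) + ∫₁^θ e(ξ)/ξ² dξ`. -/
lemma hasDerivAt_Z (H : Synge e) {x : ℝ} (hx : 0 < x) :
    HasDerivAt (Zfun e) (deriv e x / x) x := by
  have hc : ContinuousOn (fun ξ => e ξ / ξ ^ 2) (Ioi 0) :=
    H.continuousOn.div (by fun_prop) (fun x hx => pow_ne_zero 2 (ne_of_gt hx))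
  have hsub : ∀ {y : ℝ}, 0 < y → uIcc 1 y ⊆ Ioi (0 : ℝ) := fun {y} hy z hz =>
    lt_of_lt_of_le (lt_min one_pos hy) hz.1
  set G : ℝ → ℝ := fun y => e y / y + ∫ ξ in (1:ℝ)..y, e ξ / ξ ^ 2 with hG
  have hGd : ∀ y : ℝ, 0 < y → HasDerivAt G (deriv e y / y) y := by
    intro y hy
    have h1 : HasDerivAt (fun y => ∫ ξ in (1:ℝ)..y, e ξ / ξ ^ 2) (e y / y ^ 2) y :=
      intervalIntegral.integral_hasDerivAt_right
        ((hc.mono (hsub hy)).intervalIntegrable)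
        (hc.stronglyMeasurableAtFilter isOpen_Ioi y hy)
        (hc.continuousAt (isOpen_Ioi.mem_nhds hy))
    refine (((H.hasDerivAt hy).div (hasDerivAt_id y) hy.ne').add h1).congr_deriv ?_
    simp only [id]
    field_simp
    ring
  have hZ : ∀ y : ℝ, 0 < y → Zfun e y = G y - G 1 := by
    intro y hy
    refine intervalIntegral.integral_eq_sub_of_hasDerivAt
      (fun z hz => hGd z (hsub hy hz)) ?_
    refine intervalIntegral.intervalIntegrable_deriv_of_nonneg (g := G)
      (fun z hz => (hGd z (hsub hy hz)).continuousAt.continuousWithinAt) ?_ ?_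
    · exact fun z hz => hGd z (hsub hy (Ioo_subset_Icc_self hz))
    · intro z hz
      have hz0 : 0 < z := hsub hy (Ioo_subset_Icc_self hz)
      exact (div_pos (H.deriv_pos hz0) hz0).le
  refine ((hGd x hx).sub_const (G 1)).congr_of_eventuallyEq ?_
  filter_upwards [isOpen_Ioi.mem_nhds (show x ∈ Ioi (0 : ℝ) from hx)] with y hy
  exact hZ y hy

lemma hasDerivAt_h (H : Synge e) {x : ℝ} (hx : 0 < x) :
    HasDerivAt (hfun e) (1 + deriv e x) x := by
  have := ((hasDerivAt_id x).const_add 1).add (H.hasDerivAt hx)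
  exact this

lemma h_pos (H : Synge e) {x : ℝ} (hx : 0 < x) : 0 < hfun e x := by
  have := H.pos x hx
  unfold hfun
  linarith

/-- The Synge condition in the form: `h exp (-Z)` is decreasing. -/
lemma antitone_h_exp (H : Synge e) {x y : ℝ} (hx : 0 < x) (hxy : x ≤ y) :
    hfun e y * Real.exp (-Zfun e y) ≤ hfun e x * Real.exp (-Zfun e x) := by
  have hd : ∀ x : ℝ, 0 < x → HasDerivAt (fun x => hfun e x * Real.exp (-Zfun e x))
      ((1 + deriv e x) * Real.exp (-Zfun e x)
        + hfun e x * (Real.exp (-Zfun e x) * -(deriv e x / x))) x :=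
    fun x hx => (H.hasDerivAt_h hx).mul (H.hasDerivAt_Z hx).neg.exp
  refine antitoneOn_of_deriv_nonpos (convex_Ioi 0)
    (fun x hx => (hd x hx).continuousAt.continuousWithinAt) ?_ ?_ hx (hx.trans_le hxy) hxy
  · rw [interior_Ioi]
    exact fun x hx => (hd x hx).differentiableAt.differentiableWithinAt
  · rw [interior_Ioi]
    intro x hx
    have hx' : 0 < x := hx
    rw [(hd x hx).deriv]
    have : (1 + deriv e x) * Real.exp (-Zfun e x)
        + hfun e x * (Real.exp (-Zfun e x) * -(deriv e x / x))
        = Real.exp (-Zfun e x) * ((x - deriv e x * (e x + 1)) / x) := by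
      unfold hfun
      field_simp
      ring
    rw [this]
    exact mul_nonpos_of_nonneg_of_nonpos (Real.exp_pos _).le
      (div_nonpos_of_nonpos_of_nonneg (by linarith [H.ineq' hx]) hx'.le)

/-- The Synge condition in the form: `(1 + e)² - θ² = h (h - 2θ)` is increasing. -/
lemma strictMono_f (H : Synge e) {x y : ℝ} (hx : 0 < x) (hxy : x < y) :
    (1 + e x) ^ 2 - x ^ 2 < (1 + e y) ^ 2 - y ^ 2 := by
  have hd : ∀ x : ℝ, 0 < x → HasDerivAt (fun x => (1 + e x) ^ 2 - x ^ 2)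
      (2 * (1 + e x) * deriv e x - 2 * x) x := by
    intro x hx
    refine ((((H.hasDerivAt hx).const_add 1).pow 2).sub ((hasDerivAt_id x).pow 2)).congr_deriv ?_
    simp
  refine strictMonoOn_of_deriv_pos (convex_Ioi 0)
    (fun x hx => (hd x hx).continuousAt.continuousWithinAt) ?_ hx (hx.trans hxy) hxy
  rw [interior_Ioi]
  intro x hx
  rw [(hd x hx).deriv]
  nlinarith [H.ineq' hx]

lemma f_pos (H : Synge e) {x : ℝ} (hx : 0 < x) : 0 < (1 + e x) ^ 2 - x ^ 2 := by
  have h0 : 0 < min x 1 / 2 := by positivity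
  have h1 : min x 1 / 2 < x := by
    have := min_le_left x 1
    linarith
  have h2 : min x 1 / 2 ≤ 1 / 2 := by
    have := min_le_right x 1
    linarith
  have := H.strictMono_f h0 h1
  nlinarith [H.pos _ h0]

lemma lt_one_add (H : Synge e) {x : ℝ} (hx : 0 < x) : x < 1 + e x := by
  nlinarith [H.f_pos hx, H.pos x hx]

/-- The core thermodynamic inequality, comparing two temperatures on the same isentrope
(`exp (Z(y) - Z(x))` is the ratio of the densities). -/
lemma isentrope_ineq (H : Synge e) {x y : ℝ} (hx : 0 < x) (hy : 0 < y) :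
    0 ≤ hfun e x * (hfun e x - 2 * x) - hfun e y ^ 2
      + 2 * hfun e x * (y * Real.exp (Zfun e y - Zfun e x)) := by
  set g : ℝ → ℝ := fun y => hfun e x * (hfun e x - 2 * x) - hfun e y ^ 2
      + 2 * hfun e x * (y * Real.exp (Zfun e y - Zfun e x)) with hg
  have hgx : g x = 0 := by
    simp only [hg, sub_self, Real.exp_zero]
    ring
  have hd : ∀ y : ℝ, 0 < y → HasDerivAt g
      (2 * (1 + deriv e y) * Real.exp (Zfun e y) *
        (hfun e x * Real.exp (-Zfun e x) - hfun e y * Real.exp (-Zfun e y))) y := by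
    intro y hy
    have h1 := (((H.hasDerivAt_h hy).pow 2).const_sub (hfun e x * (hfun e x - 2 * x))).add
      (((hasDerivAt_id y).mul ((H.hasDerivAt_Z hy).sub_const (Zfun e x)).exp).const_mul
        (2 * hfun e x))
    refine h1.congr_deriv ?_
    simp only [id, sub_eq_add_neg, Real.exp_add]
    have : Real.exp (Zfun e y) * Real.exp (-Zfun e y) = 1 := by
      rw [← Real.exp_add]
      simp
    field_simp
    simp only [Nat.cast_ofNat, Nat.add_one_sub_one, pow_one]
    linear_combination (2 * (1 + deriv e y) * hfun e y) * this
  have hpos : ∀ y : ℝ, 0 < y → 0 ≤ 2 * (1 + deriv e y) * Real.exp (Zfun e y) := fun y hy => by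
    have := H.deriv_pos hy
    positivity
  change 0 ≤ g y
  rw [← hgx]
  rcases le_total x y with hxy | hxy
  · refine monotoneOn_of_deriv_nonneg (convex_Icc x y)
      (fun z hz => (hd z (hx.trans_le hz.1)).continuousAt.continuousWithinAt) ?_ ?_
      (left_mem_Icc.2 hxy) (right_mem_Icc.2 hxy) hxy
    · rw [interior_Icc]
      exact fun z hz => (hd z (hx.trans hz.1)).differentiableAt.differentiableWithinAt
    · rw [interior_Icc]
      intro z hz
      have hz0 := hx.trans hz.1
      rw [(hd z hz0).deriv]
      exact mul_nonneg (hpos z hz0) (sub_nonneg.2 (H.antitone_h_exp hx hz.1.le))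
  · refine antitoneOn_of_deriv_nonpos (convex_Icc y x)
      (fun z hz => (hd z (hy.trans_le hz.1)).continuousAt.continuousWithinAt) ?_ ?_
      (left_mem_Icc.2 hxy) (right_mem_Icc.2 hxy) hxy
    · rw [interior_Icc]
      exact fun z hz => (hd z (hy.trans hz.1)).differentiableAt.differentiableWithinAt
    · rw [interior_Icc]
      intro z hz
      have hz0 := hy.trans hz.1
      rw [(hd z hz0).deriv]
      exact mul_nonpos_of_nonneg_of_nonpos (hpos z hz0)
        (sub_nonpos.2 (H.antitone_h_exp hz0 hz.2.le))

/-- `isentrope_ineq` for a density `r` whose entropy is at least `σ`. -/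
lemma entropy_ineq (H : Synge e) {σ r x y : ℝ} (hr : 0 < r) (hx : 0 < x) (hy : 0 < y)
    (hS : σ ≤ -Real.log r + Zfun e x) :
    0 ≤ r * (hfun e x * (hfun e x - 2 * x) - hfun e y ^ 2)
      + 2 * hfun e x * (y * Real.exp (Zfun e y - σ)) := by
  have h1 := mul_nonneg hr.le (H.isentrope_ineq hx hy)
  have h2 : r * Real.exp (Zfun e y - Zfun e x) ≤ Real.exp (Zfun e y - σ) := by
    conv_lhs => rw [← Real.exp_log hr]
    rw [← Real.exp_add]
    exact Real.exp_le_exp.2 (by linarith)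
  have h3 := mul_le_mul_of_nonneg_left h2 (mul_pos (H.h_pos hx) hy).le
  nlinarith

end Synge

/-! ### The cone condition and the affine functionals -/

lemma gam1_sq {v : ℝ} (hv : |v| < 1) : gam1 v ^ 2 * (1 - v ^ 2) = 1 := by
  have h : 0 < 1 - v ^ 2 := by
    have := (sq_lt_one_iff_abs_lt_one v).2 hv
    linarith
  unfold gam1
  rw [div_pow, Real.sq_sqrt h.le]
  field_simp

lemma gam1_pos {v : ℝ} (hv : |v| < 1) : 0 < gam1 v := by
  have h : 0 < 1 - v ^ 2 := by
    have := (sq_lt_one_iff_abs_lt_one v).2 hv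
    linarith
  unfold gam1
  positivity

/-- The closed convex cone of vectors `(D, m, E)` with `0 ≤ D`, `|m| ≤ E` and
`√K D ≤ √(E² - m²)` (for `K ≥ 0`). -/
def Cone (K : ℝ) (u : ℝ × ℝ × ℝ) : Prop :=
  0 ≤ u.1 ∧ 0 ≤ u.2.2 - u.2.1 ∧ 0 ≤ u.2.2 + u.2.1 ∧
    K * u.1 ^ 2 ≤ (u.2.2 + u.2.1) * (u.2.2 - u.2.1)

lemma Cone.add {K : ℝ} (hK : 0 ≤ K) {u w : ℝ × ℝ × ℝ} (hu : Cone K u) (hw : Cone K w) :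
    Cone K (u + w) := by
  obtain ⟨d, m, E⟩ := u
  obtain ⟨d', m', E'⟩ := w
  obtain ⟨h1, h2, h3, h4⟩ := hu
  obtain ⟨k1, k2, k3, k4⟩ := hw
  simp only [Cone, Prod.mk_add_mk] at *
  refine ⟨by linarith, by linarith, by linarith, ?_⟩
  obtain ⟨x, hx⟩ : ∃ x, x = E + m := ⟨_, rfl⟩
  obtain ⟨y, hy⟩ : ∃ y, y = E - m := ⟨_, rfl⟩
  obtain ⟨x', hx'⟩ : ∃ x, x = E' + m' := ⟨_, rfl⟩
  obtain ⟨y', hy'⟩ : ∃ y, y = E' - m' := ⟨_, rfl⟩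
  have e1 : E + E' + (m + m') = x + x' := by subst hx hx'; ring
  have e2 : E + E' - (m + m') = y + y' := by subst hy hy'; ring
  rw [e1, e2]
  rw [← hx] at h3 h4
  rw [← hy] at h2 h4
  rw [← hx'] at k3 k4
  rw [← hy'] at k2 k4
  -- The cross terms: `x y' + x' y ≥ 2 √(x y x' y') ≥ 2 K d d'`.
  have key : 2 * (K * (d * d')) ≤ x * y' + x' * y := by
    refine abs_le_of_sq_le_sq' ?_ (by positivity) |>.2
    have h5 : (K * d ^ 2) * (K * d' ^ 2) ≤ (x * y) * (x' * y') :=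
      mul_le_mul h4 k4 (by positivity) (by positivity)
    nlinarith [sq_nonneg (x * y' - x' * y)]
  nlinarith

lemma Cone.smul {K c : ℝ} (hc : 0 ≤ c) {u : ℝ × ℝ × ℝ} (hu : Cone K u) : Cone K (c • u) := by
  obtain ⟨d, m, E⟩ := u
  obtain ⟨h1, h2, h3, h4⟩ := hu
  simp only [Cone, Prod.smul_mk, smul_eq_mul] at *
  refine ⟨by positivity, ?_, ?_, ?_⟩
  · nlinarith
  · nlinarith
  · nlinarith [mul_le_mul_of_nonneg_left h4 (sq_nonneg c)]

/-- The affine functional `E - m v* - D h(θ*) √(1 - v*²)`, without its constant term. -/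
def Lin (e : ℝ → ℝ) (w t : ℝ) (u : ℝ × ℝ × ℝ) : ℝ :=
  u.2.2 - u.2.1 * w - u.1 * (hfun e t * Real.sqrt (1 - w ^ 2))

/-! ### Null vectors -/

section Null

variable {e : ℝ → ℝ} {r v t s : ℝ}

lemma null_D_pos (hr : 0 < r) (hv : |v| < 1) (hs : s = 1 ∨ s = -1) :
    0 < (U1 e r v t + s • F1s e r v t).1 := by
  have hg := gam1_pos hv
  have hv' := abs_lt.1 hv
  have h1 : 0 < 1 + s * v := by rcases hs with rfl | rfl <;> linarith
  have : (U1 e r v t + s • F1s e r v t).1 = r * gam1 v * (1 + s * v) := by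
    simp only [U1, F1s, Prod.smul_mk, Prod.mk_add_mk, smul_eq_mul]
    ring
  rw [this]
  positivity

lemma null_cone (H : Synge e) (hr : 0 < r) (hv : |v| < 1) (ht : 0 < t) (hs : s = 1 ∨ s = -1)
    {t₀ : ℝ} (h0 : 0 < t₀) (hle : t₀ ≤ t) :
    Cone ((1 + e t₀) ^ 2 - t₀ ^ 2) (U1 e r v t + s • F1s e r v t) := by
  have hD := (null_D_pos (e := e) (t := t) hr hv hs).le
  have hg := gam1_sq hv
  have hK : (1 + e t₀) ^ 2 - t₀ ^ 2 ≤ (1 + e t) ^ 2 - t ^ 2 := by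
    rcases hle.eq_or_lt with rfl | h
    · exact le_rfl
    · exact (H.strictMono_f h0 h).le
  have hh := H.h_pos ht
  have hlt : 0 < hfun e t - 2 * t := by
    have := H.lt_one_add ht
    unfold hfun
    linarith
  have hf : (1 + e t) ^ 2 - t ^ 2 = hfun e t * (hfun e t - 2 * t) := by
    unfold hfun
    ring
  rw [hf] at hK
  -- One of `E ± m` is `r h γ² (1 + s v)²`, the other is `r (h - 2 t)`.
  have hprod := mul_le_mul_of_nonneg_right hK (sq_nonneg (r * gam1 v * (1 + s * v)))
  rcases hs with rfl | rfl
  · have e1 : (U1 e r v t + (1:ℝ) • F1s e r v t).2.2 - (U1 e r v t + (1:ℝ) • F1s e r v t).2.1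
        = r * (hfun e t - 2 * t) := by
      simp only [U1, F1s, Prod.smul_mk, Prod.mk_add_mk, smul_eq_mul]
      linear_combination r * hfun e t * hg
    have e2 : (U1 e r v t + (1:ℝ) • F1s e r v t).2.2 + (U1 e r v t + (1:ℝ) • F1s e r v t).2.1
        = r * hfun e t * (gam1 v * (1 + 1 * v)) ^ 2 := by
      simp only [U1, F1s, Prod.smul_mk, Prod.mk_add_mk, smul_eq_mul]
      ring
    have e3 : (U1 e r v t + (1:ℝ) • F1s e r v t).1 = r * gam1 v * (1 + 1 * v) := by
      simp only [U1, F1s, Prod.smul_mk, Prod.mk_add_mk, smul_eq_mul]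
      ring
    refine ⟨hD, ?_, ?_, ?_⟩
    · rw [e1]; positivity
    · rw [e2]; positivity
    · rw [e1, e2, e3]; linarith
  · have e1 : (U1 e r v t + (-1:ℝ) • F1s e r v t).2.2 + (U1 e r v t + (-1:ℝ) • F1s e r v t).2.1
        = r * (hfun e t - 2 * t) := by
      simp only [U1, F1s, Prod.smul_mk, Prod.mk_add_mk, smul_eq_mul]
      linear_combination r * hfun e t * hg
    have e2 : (U1 e r v t + (-1:ℝ) • F1s e r v t).2.2 - (U1 e r v t + (-1:ℝ) • F1s e r v t).2.1
        = r * hfun e t * (gam1 v * (1 + -1 * v)) ^ 2 := by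
      simp only [U1, F1s, Prod.smul_mk, Prod.mk_add_mk, smul_eq_mul]
      ring
    have e3 : (U1 e r v t + (-1:ℝ) • F1s e r v t).1 = r * gam1 v * (1 + -1 * v) := by
      simp only [U1, F1s, Prod.smul_mk, Prod.mk_add_mk, smul_eq_mul]
      ring
    refine ⟨hD, ?_, ?_, ?_⟩
    · rw [e2]; positivity
    · rw [e1]; positivity
    · rw [e1, e2, e3]; linarith

/-- The affine inequality for a null vector. The constant term carries the weight `1 + s w`; these
weights average to `1` over the combination forming the update. -/
lemma null_lin (H : Synge e) (hr : 0 < r) (hv : |v| < 1) (ht : 0 < t) (hs : s = 1 ∨ s = -1)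
    {σ : ℝ} (hS : σ ≤ -Real.log r + Zfun e t) {w y : ℝ} (hw : |w| < 1) (hy : 0 < y) :
    0 ≤ Lin e w y (U1 e r v t + s • F1s e r v t)
      + y * Real.exp (Zfun e y - σ) * (1 + s * w) := by
  have hE := H.entropy_ineq hr ht hy hS
  have hg := gam1_sq hv
  have hh := H.h_pos ht
  have hw' := abs_lt.1 hw
  have hss : s * s = 1 := by rcases hs with rfl | rfl <;> norm_num
  have hX : 0 < 1 + s * w := by rcases hs with rfl | rfl <;> linarith
  have hY : 0 < 1 - s * w := by rcases hs with rfl | rfl <;> linarith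
  have hc : Real.sqrt (1 - w ^ 2) ^ 2 = (1 + s * w) * (1 - s * w) := by
    rw [Real.sq_sqrt]
    · linear_combination (w ^ 2) * hss
    · nlinarith
  obtain ⟨c, hcd⟩ : ∃ c, c = Real.sqrt (1 - w ^ 2) := ⟨_, rfl⟩
  obtain ⟨P, hP⟩ : ∃ P, P = y * Real.exp (Zfun e y - σ) := ⟨_, rfl⟩
  obtain ⟨k, hk⟩ : ∃ k, k = gam1 v * (1 + s * v) := ⟨_, rfl⟩
  rw [← hcd] at hc
  rw [← hP] at hE ⊢
  have hLin : Lin e w y (U1 e r v t + s • F1s e r v t)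
      = r * hfun e t * (k ^ 2 * (1 - s * w) + (1 + s * w)) / 2 - r * t * (1 + s * w)
        - r * k * hfun e y * c := by
    simp only [Lin, U1, F1s, Prod.smul_mk, Prod.mk_add_mk, smul_eq_mul, ← hcd, hk]
    rcases hs with rfl | rfl
    · linear_combination (r * hfun e t * (1 + w) / 2) * hg
    · linear_combination (r * hfun e t * (1 - w) / 2) * hg
  rw [hLin]
  -- AM-GM: `2 h k h* c ≤ h² k² (1 - s w) + h*² (1 + s w)`, since `c² = (1 + s w) (1 - s w)`.
  have hAM : 0 ≤ hfun e t ^ 2 * k ^ 2 * (1 - s * w) + hfun e y ^ 2 * (1 + s * w)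
      - 2 * hfun e t * k * hfun e y * c := by
    have h1 : 0 ≤ (hfun e t * k * c - hfun e y * (1 + s * w)) ^ 2 := sq_nonneg _
    have h2 : (hfun e t * k * c - hfun e y * (1 + s * w)) ^ 2 = (1 + s * w) *
        (hfun e t ^ 2 * k ^ 2 * (1 - s * w) + hfun e y ^ 2 * (1 + s * w)
          - 2 * hfun e t * k * hfun e y * c) := by
      linear_combination (hfun e t ^ 2 * k ^ 2) * hc
    rw [h2] at h1
    exact nonneg_of_mul_nonneg_right h1 hX
  refine nonneg_of_mul_nonneg_right (a := 2 * hfun e t) ?_ (by positivity)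
  have h3 := mul_nonneg hr.le hAM
  have h4 := mul_nonneg hX.le hE
  linarith

end Null

/-! ### Recovery of admissible states -/

/-- Recovery of primitive variables: with `q = √((E + p)² - m²)`, the pressure is a zero of
`q - D h(p (E + p) / (q D))`. -/
lemma exists_prim {e : ℝ → ℝ} (H : Synge e) {t₀ D m E : ℝ} (h0 : 0 < t₀) (hD : 0 < D)
    (hC : Cone ((1 + e t₀) ^ 2 - t₀ ^ 2) (D, m, E)) :
    ∃ ρ v θ : ℝ, 0 < ρ ∧ 0 < θ ∧ |v| < 1 ∧ (D, m, E) = U1 e ρ v θ := by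
  obtain ⟨-, h2, h3, h4⟩ := hC
  simp only at h2 h3 h4
  have hK := H.f_pos h0
  have hpos : 0 < (E + m) * (E - m) := lt_of_lt_of_le (by positivity) h4
  have hp : 0 < E + m := lt_of_le_of_ne h3 (by rintro h; rw [← h] at hpos; simp at hpos)
  have hm : 0 < E - m := lt_of_le_of_ne h2 (by rintro h; rw [← h] at hpos; simp at hpos)
  have hE : 0 < E := by linarith
  have hq2 : ∀ p : ℝ, 0 ≤ p → 0 < (E + p) ^ 2 - m ^ 2 := fun p hp => by nlinarith
  set q : ℝ → ℝ := fun p => Real.sqrt ((E + p) ^ 2 - m ^ 2) with hq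
  have hqpos : ∀ p : ℝ, 0 ≤ p → 0 < q p := fun p hp => Real.sqrt_pos.2 (hq2 p hp)
  have hqsq : ∀ p : ℝ, 0 ≤ p → q p ^ 2 = (E + p) ^ 2 - m ^ 2 :=
    fun p hp => Real.sq_sqrt (hq2 p hp).le
  set T : ℝ → ℝ := fun p => p * (E + p) / (q p * D) with hT
  have hTpos : ∀ p : ℝ, 0 < p → 0 < T p := fun p hp => by
    have := hqpos p hp.le
    simp only [hT]
    positivity
  set Φ : ℝ → ℝ := fun p => q p - D * hfun e (T p) with hΦ
  have hqc : Continuous q := by fun_prop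
  have hΦc : ContinuousOn Φ (Ioi 0) := by
    have hTc : ContinuousOn T (Ioi 0) := ContinuousOn.div (by fun_prop) (by fun_prop)
      (fun p hp => (mul_pos (hqpos p (le_of_lt hp)) hD).ne')
    have hec : ContinuousOn (fun p => e (T p)) (Ioi 0) := H.continuousOn.comp hTc hTpos
    unfold hfun at hΦ
    exact hqc.continuousOn.sub (continuousOn_const.mul ((continuousOn_const.add hTc).add hec))
  -- A temperature `t₁` so small that `h(t₁)² < (1 + e(t₀))² - t₀²`.
  obtain ⟨t₁, ht₁, hht₁⟩ : ∃ t₁ : ℝ, 0 < t₁ ∧ hfun e t₁ ^ 2 < (1 + e t₀) ^ 2 - t₀ ^ 2 := by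
    have hδ := H.strictMono_f (half_pos h0) (half_lt_self h0)
    obtain ⟨δ, hδd⟩ : ∃ δ, δ = (1 + e t₀) ^ 2 - t₀ ^ 2 - ((1 + e (t₀ / 2)) ^ 2 - (t₀ / 2) ^ 2) :=
      ⟨_, rfl⟩
    have hδ0 : 0 < δ := by linarith
    have hh := H.h_pos h0
    refine ⟨min (t₀ / 4) (δ / (4 * hfun e t₀)), by positivity, ?_⟩
    have ht1 : 0 < min (t₀ / 4) (δ / (4 * hfun e t₀)) := by positivity
    have hl := min_le_left (t₀ / 4) (δ / (4 * hfun e t₀))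
    have hr := min_le_right (t₀ / 4) (δ / (4 * hfun e t₀))
    generalize min (t₀ / 4) (δ / (4 * hfun e t₀)) = x at *
    have hf := H.strictMono_f ht1 (show x < t₀ / 2 by linarith)
    have hhx : hfun e x ≤ hfun e t₀ := by
      have := H.mono ht1 (show x ≤ t₀ by linarith)
      unfold hfun
      linarith
    have h5 : x * (4 * hfun e t₀) ≤ δ := (le_div_iff₀ (by positivity)).1 hr
    have h6 : x * hfun e x ≤ x * hfun e t₀ := mul_le_mul_of_nonneg_left hhx ht1.le
    have h7 : hfun e x ^ 2 = (1 + e x) ^ 2 - x ^ 2 + 2 * (x * hfun e x) := by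
      unfold hfun
      ring
    linarith
  have hq0 := hqpos 0 le_rfl
  have hp₀ : 0 < D * t₁ * q 0 / E := by positivity
  have hΦ0 : 0 < Φ (D * t₁ * q 0 / E) := by
    set p := D * t₁ * q 0 / E with hpd
    have hqp := hqpos p hp₀.le
    have hq00 := hqsq 0 le_rfl
    have hqpp := hqsq p hp₀.le
    -- The Lorentz factor `(E + p) / q(p)` is at most its value at `p = 0`.
    have hmono : (E + p) * q 0 ≤ E * q p := by
      refine abs_le_of_sq_le_sq' ?_ (by positivity) |>.2
      rw [mul_pow, mul_pow, hq00, hqpp]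
      have h8 : E ^ 2 ≤ (E + p) ^ 2 := by nlinarith
      nlinarith [mul_le_mul_of_nonneg_left h8 (sq_nonneg m)]
    have hTt : T p ≤ t₁ := by
      simp only [hT]
      rw [div_le_iff₀ (by positivity)]
      have hpE : p * E = D * t₁ * q 0 := by
        rw [hpd]
        field_simp
      have h9 : E * (p * (E + p)) ≤ E * (t₁ * (q p * D)) := by
        calc E * (p * (E + p)) = D * t₁ * ((E + p) * q 0) := by
              linear_combination (E + p) * hpE
          _ ≤ D * t₁ * (E * q p) := mul_le_mul_of_nonneg_left hmono (by positivity)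
          _ = _ := by ring
      exact le_of_mul_le_mul_left h9 hE
    have hhT : hfun e (T p) ≤ hfun e t₁ := by
      have := H.mono (hTpos p hp₀) hTt
      unfold hfun
      linarith
    have h10 : D * hfun e t₁ < q p := by
      refine abs_lt_of_sq_lt_sq' ?_ hqp.le |>.2
      rw [hqpp, mul_pow]
      have := mul_lt_mul_of_pos_left hht₁ (show 0 < D ^ 2 by positivity)
      nlinarith
    have := mul_le_mul_of_nonneg_left hhT hD.le
    simp only [hΦ]
    linarith
  -- At `p = E` one has `q ≤ 2 E` and `D h > 2 D θ ≥ 2 E`.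
  have hΦE : Φ E < 0 := by
    have hqE := hqpos E hE.le
    have hqE2 : q E ≤ 2 * E := by
      refine abs_le_of_sq_le_sq' ?_ (by positivity) |>.2
      rw [hqsq E hE.le]
      nlinarith [sq_nonneg m]
    have hTE : E ≤ D * T E := by
      have : D * T E = E * (2 * E) / q E := by
        simp only [hT]
        field_simp
        ring
      rw [this, le_div_iff₀ hqE]
      exact mul_le_mul_of_nonneg_left hqE2 hE.le
    have := mul_lt_mul_of_pos_left (H.lt_one_add (hTpos E hE)) hD
    simp only [hΦ, hfun]
    nlinarith
  have hsub : uIcc E (D * t₁ * q 0 / E) ⊆ Ioi (0 : ℝ) := fun z hz =>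
    lt_of_lt_of_le (lt_min hE hp₀) hz.1
  obtain ⟨p, hpm, hp0⟩ := intermediate_value_uIcc (hΦc.mono hsub)
    (show (0 : ℝ) ∈ uIcc (Φ E) (Φ (D * t₁ * q 0 / E)) from
      Icc_subset_uIcc ⟨hΦE.le, hΦ0.le⟩)
  have hppos : 0 < p := hsub hpm
  have hqp := hqpos p hppos.le
  have hqpp := hqsq p hppos.le
  have ha : 0 < E + p := by linarith
  have hqD : q p = D * hfun e (T p) := by
    simp only [hΦ] at hp0
    linarith
  have hgam : gam1 (m / (E + p)) = (E + p) / q p := by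
    unfold gam1
    have : 1 - (m / (E + p)) ^ 2 = (q p / (E + p)) ^ 2 := by
      rw [div_pow, div_pow, hqpp]
      field_simp
    rw [this, Real.sqrt_sq (by positivity)]
    field_simp
  refine ⟨D * q p / (E + p), m / (E + p), T p, by positivity, hTpos p hppos, ?_, ?_⟩
  · rw [abs_div, abs_of_pos ha, div_lt_one ha, abs_lt]
    constructor <;> linarith
  · have hA : D * q p / (E + p) * hfun e (T p) * ((E + p) / q p) ^ 2 = E + p := by
      have : D * q p / (E + p) * hfun e (T p) * ((E + p) / q p) ^ 2
          = (D * hfun e (T p)) * (E + p) / q p := by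
        field_simp
      rw [this, ← hqD]
      field_simp
    have hρT : D * q p / (E + p) * T p = p := by
      simp only [hT]
      field_simp
    simp only [U1, hgam, hA, hρT]
    refine Prod.ext ?_ (Prod.ext ?_ ?_)
    · simp only
      field_simp
    · simp only
      field_simp
    · simp only
      ring

/-- The cone condition and the affine inequalities together imply membership in `Ω_σ`. -/
lemma mem_Omega1 {e : ℝ → ℝ} (H : Synge e) {σ t₀ : ℝ} {u : ℝ × ℝ × ℝ} (h0 : 0 < t₀)
    (hD : 0 < u.1) (hC : Cone ((1 + e t₀) ^ 2 - t₀ ^ 2) u)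
    (hL : ∀ w y : ℝ, |w| < 1 → 0 < y → 0 ≤ Lin e w y u + y * Real.exp (Zfun e y - σ)) :
    u ∈ Omega1 e σ := by
  obtain ⟨D, m, E⟩ := u
  obtain ⟨r, v, t, hr, ht, hv, hu⟩ := exists_prim H h0 hD hC
  refine ⟨r, v, t, hr, ht, hv, ?_, hu⟩
  have h := hL v t hv ht
  have hg := gam1_sq hv
  have hgs : gam1 v * Real.sqrt (1 - v ^ 2) = 1 := by
    have : 0 < 1 - v ^ 2 := by
      have := (sq_lt_one_iff_abs_lt_one v).2 hv
      linarith
    unfold gam1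
    field_simp
  have hLin : Lin e v t (U1 e r v t) = - (r * t) := by
    simp only [Lin, U1]
    linear_combination (r * hfun e t) * hg - (r * hfun e t) * hgs
  rw [hu, hLin] at h
  have h1 : r ≤ Real.exp (Zfun e t - σ) := by
    refine le_of_mul_le_mul_right ?_ ht
    linarith
  have h2 := (Real.log_le_iff_le_exp hr).2 h1
  linarith

/-- first-order 1D Lax–Friedrichs scheme is entropy-preserving.
Let `e` be a Synge-type EOS, `d = 1`, `σ ∈ ℝ`. Given three admissible primitive
states (indexed by `k = 0,1,2`, representing cells `j−1, j, j+1`), each with specific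
entropy at least `σ`, and a CFL ratio `0 < λ ≤ 1` (wave-speed bound `α = 1`), the
Lax–Friedrichs update of the middle state stays in `Ω_σ`. -/
theorem minimum_entropy_stmt12 (e : ℝ → ℝ)
    (hdiff : ∀ ξ : ℝ, 0 < ξ → DifferentiableAt ℝ e ξ)
    (hpos : ∀ ξ : ℝ, 0 < ξ → 0 < e ξ)
    (hineq : ∀ ξ : ℝ, 0 < ξ → ξ / (e ξ + 1) < deriv e ξ)
    (σ : ℝ) (ρ v θ : Fin 3 → ℝ)
    (hρ : ∀ k, 0 < ρ k) (hθ : ∀ k, 0 < θ k) (hv : ∀ k, |v k| < 1)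
    (hS : ∀ k, σ ≤ -Real.log (ρ k) + Zfun e (θ k))
    (lam : ℝ) (hlam0 : 0 < lam) (hlam1 : lam ≤ 1) :
    U1 e (ρ 1) (v 1) (θ 1) -
        lam • (LFflux (U1 e (ρ 1) (v 1) (θ 1)) (U1 e (ρ 2) (v 2) (θ 2))
                 (F1s e (ρ 1) (v 1) (θ 1)) (F1s e (ρ 2) (v 2) (θ 2)) -
               LFflux (U1 e (ρ 0) (v 0) (θ 0)) (U1 e (ρ 1) (v 1) (θ 1))
                 (F1s e (ρ 0) (v 0) (θ 0)) (F1s e (ρ 1) (v 1) (θ 1)))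
      ∈ Omega1 e σ := by
  have H : Synge e := ⟨hdiff, hpos, hineq⟩
  obtain ⟨t₀, ht₀, hle⟩ : ∃ t₀ : ℝ, 0 < t₀ ∧ ∀ k, t₀ ≤ θ k := by
    refine ⟨min (θ 0) (min (θ 1) (θ 2)), lt_min (hθ 0) (lt_min (hθ 1) (hθ 2)), fun k => ?_⟩
    fin_cases k <;> simp
  set N : Fin 3 → ℝ → ℝ × ℝ × ℝ := fun k s =>
    U1 e (ρ k) (v k) (θ k) + s • F1s e (ρ k) (v k) (θ k) with hN
  have hdec : U1 e (ρ 1) (v 1) (θ 1) -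
        lam • (LFflux (U1 e (ρ 1) (v 1) (θ 1)) (U1 e (ρ 2) (v 2) (θ 2))
                 (F1s e (ρ 1) (v 1) (θ 1)) (F1s e (ρ 2) (v 2) (θ 2)) -
               LFflux (U1 e (ρ 0) (v 0) (θ 0)) (U1 e (ρ 1) (v 1) (θ 1))
                 (F1s e (ρ 0) (v 0) (θ 0)) (F1s e (ρ 1) (v 1) (θ 1)))
      = ((1 - lam) / 2) • (N 1 1 + N 1 (-1)) + (lam / 2) • (N 0 1 + N 2 (-1)) := by
    simp only [hN, LFflux]
    module
  rw [hdec]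
  have hp : (1:ℝ) = 1 ∨ (1:ℝ) = -1 := Or.inl rfl
  have hm : (-1:ℝ) = 1 ∨ (-1:ℝ) = -1 := Or.inr rfl
  have hl1 : 0 ≤ (1 - lam) / 2 := by linarith
  have hl2 : 0 < lam / 2 := by linarith
  have hK := (H.f_pos ht₀).le
  have hcone : ∀ k s, (s = 1 ∨ s = -1) → Cone ((1 + e t₀) ^ 2 - t₀ ^ 2) (N k s) :=
    fun k s hs => null_cone H (hρ k) (hv k) (hθ k) hs ht₀ (hle k)
  have hDp : ∀ k s, (s = 1 ∨ s = -1) → 0 < (N k s).1 :=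
    fun k s hs => null_D_pos (hρ k) (hv k) hs
  refine mem_Omega1 H ht₀ ?_ ?_ ?_
  · have h1 := mul_nonneg hl1 (add_pos (hDp 1 1 hp) (hDp 1 (-1) hm)).le
    have h2 := mul_pos hl2 (add_pos (hDp 0 1 hp) (hDp 2 (-1) hm))
    simp only [Prod.fst_add, Prod.smul_fst, smul_eq_mul]
    linarith
  · exact Cone.add hK (Cone.smul hl1 (Cone.add hK (hcone 1 1 hp) (hcone 1 (-1) hm)))
      (Cone.smul hl2.le (Cone.add hK (hcone 0 1 hp) (hcone 2 (-1) hm)))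
  · intro w y hw hy
    have hn : ∀ k s, (s = 1 ∨ s = -1) →
        0 ≤ Lin e w y (N k s) + y * Real.exp (Zfun e y - σ) * (1 + s * w) :=
      fun k s hs => null_lin H (hρ k) (hv k) (hθ k) hs (hS k) hw hy
    have h1 := mul_nonneg hl1 (add_nonneg (hn 1 1 hp) (hn 1 (-1) hm))
    have h2 := mul_nonneg hl2.le (add_nonneg (hn 0 1 hp) (hn 2 (-1) hm))
    have hlin : Lin e w y
          (((1 - lam) / 2) • (N 1 1 + N 1 (-1)) + (lam / 2) • (N 0 1 + N 2 (-1)))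
        = (1 - lam) / 2 * (Lin e w y (N 1 1) + Lin e w y (N 1 (-1)))
          + lam / 2 * (Lin e w y (N 0 1) + Lin e w y (N 2 (-1))) := by
      simp only [Lin, Prod.fst_add, Prod.snd_add, Prod.smul_fst, Prod.smul_snd, smul_eq_mul]
      ring
    rw [hlin]
    linarith
end
end

section
/- Let e : (0,∞) → ℝ be a Synge-type EOS, d ≥ 1, and σ ∈ ℝ. Let N ≥ 1, and let ℓ_1,…,ℓ_N > 0 (edge lengths) and unit vectors ξ^{(1)},…,ξ^{(N)} ∈ ℝ^d (outward unit normals) satisfy Σ_{j=1}^N ℓ_j ξ^{(j)} = 0. Let |K| > 0 and Δt > 0 satisfy (Δt/(2|K|))·Σ_{j=1}^N ℓ_j ≤ 1 (CFL condition with α = 1). Let (ρ_K, v_K, θ_K) and (ρ_j, v_j, θ_j), j = 1,…,N, be primitive states, each with positive density, positive θ, speed less than 1, and specific entropy −ln ρ + Z(θ) ≥ σ; write U_K, U_j for their conservative vectors and F(·)ξ = Σ_{i=1}^d ξ_i F_i(·). Define U_K⁺ = U_K − (Δt/|K|)·Σ_{j=1}^N ℓ_j·½(F(U_K)ξ^{(j)}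 + F(U_j)ξ^{(j)} + U_K − U_j). Then U_K⁺ ∈ Ω_σ. -/
/-!
The set `Ω_σ` is described by linear inequalities. For a temperature `t > 0` and a velocity `w`, let
`L u = u · n_*(w, t)`, the functional `u_E − w·u_m − h(t) √(1 − |w|²) u_D`. A vector of positive
mass lies in `Ω_σ` if `L u ≥ −p_*(t)` for all `t` and `w`, and if moreover `L u ≥ 0` for all `w` at
one temperature `t₀` (`recover`); the second condition excludes cold vectors on the boundary, for
which no positive temperature exists. The temperature is found by the intermediate value theorem,
and the inequality at that temperature is then exactly the entropy bound.

These inequalities are stable under the scheme, since the update is a combination with nonnegative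
coefficients of `U_K` and of the vectors `U_j − F(U_j)ξ^{(j)}` (`update_eq`). For each of the latter
one has `L (U − F(U)ζ) ≥ −p_*(t) (1 − ζ·w)` (`flux_ineq`), and the terms `ζ·w` cancel in the sum
because the normals add up to zero (`update_ineq`).

The flux estimate rests on two inequalities. The geometric one, `null_ineq`, bounds the relative
Lorentz factor of two velocities below by `(r + 1/r)/2`, where `r` is the ratio of the products of
their four-velocities with the null vector attached to `ζ`. This reduces the estimate to the sign of
a discriminant, and that sign is an inequality about the equation of state alone (`eos_key`),
obtained by minimising over the temperature; it is here that `(1 + e)e' > θ` is used. The strict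
monotonicity of `(1 + e)² − θ²` gives the version with `p_*` replaced by `0` at a small `t₀`
(`eos_small`).
-/

open scoped BigOperators

noncomputable section

/-! ### The equation of state -/

open Set in
/-- `e'` is not assumed continuous, so the derivative of `Z` at every point does not come from the
fundamental theorem for continuous integrands. Instead `e'(s)/s` is the derivative of
`e(y)/y + ∫₁^y e(s)/s² ds`, and it is integrable because it is nonnegative. -/
theorem Zfun_hasDerivAt {e : ℝ → ℝ}
    (hdiff : ∀ ξ : ℝ, 0 < ξ → DifferentiableAt ℝ e ξ)
    (hder : ∀ ξ : ℝ, 0 < ξ → 0 ≤ deriv e ξ) {θ : ℝ} (hθ : 0 < θ) :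
    HasDerivAt (Zfun e) (deriv e θ / θ) θ := by
  have hcont : ContinuousOn (fun s : ℝ => e s / s ^ 2) (Ioi 0) := fun s hs =>
    ((hdiff s hs).continuousAt.div (continuous_pow 2).continuousAt
      (pow_ne_zero 2 (ne_of_gt hs))).continuousWithinAt
  have hsub : ∀ {a b : ℝ}, 0 < a → 0 < b → uIcc a b ⊆ Ioi 0 := by
    intro a b ha hb x hx
    exact lt_of_lt_of_le (lt_min ha hb) hx.1
  have hW : ∀ x : ℝ, 0 < x →
      HasDerivAt (fun y => e y / y + ∫ s in (1:ℝ)..y, e s / s ^ 2) (deriv e x / x) x := by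
    intro x hx
    have hI : HasDerivAt (fun y => ∫ s in (1:ℝ)..y, e s / s ^ 2) (e x / x ^ 2) x :=
      intervalIntegral.integral_hasDerivAt_right
        (hcont.mono (hsub one_pos hx)).intervalIntegrable
        (hcont.stronglyMeasurableAtFilter isOpen_Ioi x hx)
        (hcont.continuousAt (Ioi_mem_nhds hx))
    refine HasDerivAt.congr_deriv
      (((hdiff x hx).hasDerivAt.div (hasDerivAt_id x) hx.ne').add hI) ?_
    simp only [id]
    field_simp
    ring
  have hev : (fun y => e y / y + (∫ s in (1:ℝ)..y, e s / s ^ 2) -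
      (e 1 / 1 + ∫ s in (1:ℝ)..1, e s / s ^ 2)) =ᶠ[nhds θ] Zfun e := by
    filter_upwards [Ioi_mem_nhds hθ] with y hy
    have hy' : ∀ x ∈ uIcc 1 y, HasDerivAt (fun y => e y / y + ∫ s in (1:ℝ)..y, e s / s ^ 2)
        (deriv e x / x) x := fun x hx => hW x (hsub one_pos hy hx)
    refine (intervalIntegral.integral_eq_sub_of_hasDerivAt hy' ?_).symm
    refine intervalIntegral.intervalIntegrable_deriv_of_nonneg
      (HasDerivAt.continuousOn hy') (fun x hx => hy' x (Ioo_subset_Icc_self hx)) ?_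
    intro x hx
    have hx0 : 0 < x := hsub one_pos hy (Ioo_subset_Icc_self hx)
    exact div_nonneg (hder x hx0) hx0.le
  exact ((hW θ hθ).sub_const _).congr_of_eventuallyEq hev.symm

theorem eos_mul_deriv {e : ℝ → ℝ}
    (hpos : ∀ ξ : ℝ, 0 < ξ → 0 < e ξ)
    (hineq : ∀ ξ : ℝ, 0 < ξ → ξ / (e ξ + 1) < deriv e ξ) {s : ℝ} (hs : 0 < s) :
    0 < deriv e s ∧ s < (1 + e s) * deriv e s := by
  have h1 := hpos s hs
  have h2 := hineq s hs
  have h3 : 0 < s / (e s + 1) := by positivity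
  rw [div_lt_iff₀ (by linarith)] at h2
  exact ⟨h3.trans (hineq s hs), by linarith⟩

open Set in
theorem eos_strictMono {e : ℝ → ℝ}
    (hdiff : ∀ ξ : ℝ, 0 < ξ → DifferentiableAt ℝ e ξ)
    (hpos : ∀ ξ : ℝ, 0 < ξ → 0 < e ξ)
    (hineq : ∀ ξ : ℝ, 0 < ξ → ξ / (e ξ + 1) < deriv e ξ) :
    StrictMonoOn (fun s => (1 + e s) ^ 2 - s ^ 2) (Ioi 0) := by
  have hd : ∀ s : ℝ, 0 < s →
      HasDerivAt (fun s => (1 + e s) ^ 2 - s ^ 2) (2 * ((1 + e s) * deriv e s - s)) s := by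
    intro s hs
    refine HasDerivAt.congr_deriv
      ((((hdiff s hs).hasDerivAt.const_add 1).pow 2).sub ((hasDerivAt_id s).pow 2)) ?_
    simp only [id]
    norm_num
    ring
  refine strictMonoOn_of_deriv_pos (convex_Ioi 0)
    (fun s hs => (hd s hs).continuousAt.continuousWithinAt) ?_
  intro s hs
  rw [interior_Ioi] at hs
  rw [(hd s hs).deriv]
  have := (eos_mul_deriv hpos hineq hs).2
  linarith

open Set in
/-- The right-hand side, as a function `G` of `θ`, equals `h(t)²` at `θ = t` and has derivative
`2((1 + e)e' − θ)(1 − t exp(Z(t) − Z(θ))/θ)`. The condition on `e'` makes the first factor positive,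
and monotonicity of `Z` gives the second the sign of `θ − t`, so `G` is least at `θ = t`. -/
theorem eos_key {e : ℝ → ℝ}
    (hdiff : ∀ ξ : ℝ, 0 < ξ → DifferentiableAt ℝ e ξ)
    (hpos : ∀ ξ : ℝ, 0 < ξ → 0 < e ξ)
    (hineq : ∀ ξ : ℝ, 0 < ξ → ξ / (e ξ + 1) < deriv e ξ)
    {θ t : ℝ} (hθ : 0 < θ) (ht : 0 < t) :
    (hfun e t) ^ 2 ≤ (1 + e θ) ^ 2 - θ ^ 2 +
      2 * hfun e θ * (t * Real.exp (Zfun e t - Zfun e θ)) := by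
  let G : ℝ → ℝ := fun s => (1 + e s) ^ 2 - s ^ 2 +
      2 * hfun e s * (t * Real.exp (Zfun e t - Zfun e s))
  let X : ℝ → ℝ := fun s => Real.exp (Zfun e t - Zfun e s)
  have hder0 : ∀ ξ : ℝ, 0 < ξ → 0 ≤ deriv e ξ := fun s hs => (eos_mul_deriv hpos hineq hs).1.le
  have hG : ∀ s : ℝ, 0 < s → HasDerivAt G
      (2 * ((1 + e s) * deriv e s - s) * (1 - t * X s / s)) s := by
    intro s hs
    have he := (hdiff s hs).hasDerivAt
    have hZ := Zfun_hasDerivAt hdiff hder0 hs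
    have h1 := ((he.const_add 1).pow 2).sub ((hasDerivAt_id s).pow 2)
    have h2 : HasDerivAt (fun s => hfun e s) (1 + deriv e s) s :=
      ((hasDerivAt_id s).const_add 1).add he
    have h3 := ((hZ.const_sub (Zfun e t)).exp).const_mul t
    refine HasDerivAt.congr_deriv (h1.add ((h2.const_mul 2).mul h3)) ?_
    simp only [id, X, hfun]
    norm_num
    field_simp
    ring
  have hZmono : MonotoneOn (Zfun e) (Ioi 0) := by
    refine monotoneOn_of_deriv_nonneg (convex_Ioi 0)
      (fun s hs => (Zfun_hasDerivAt hdiff hder0 hs).continuousAt.continuousWithinAt)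
      (fun s hs => ?_) (fun s hs => ?_)
    · rw [interior_Ioi] at hs
      exact (Zfun_hasDerivAt hdiff hder0 hs).differentiableAt.differentiableWithinAt
    · rw [interior_Ioi] at hs
      rw [(Zfun_hasDerivAt hdiff hder0 hs).deriv]
      exact div_nonneg (hder0 s hs) (le_of_lt hs)
  have hGt : G t = hfun e t ^ 2 := by
    simp only [G, sub_self, Real.exp_zero, hfun]
    ring
  have hA : ∀ s : ℝ, 0 < s → 0 ≤ 2 * ((1 + e s) * deriv e s - s) := fun s hs => by
    have := (eos_mul_deriv hpos hineq hs).2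
    linarith
  change hfun e t ^ 2 ≤ G θ
  rw [← hGt]
  rcases le_total t θ with h | h
  · have hm : MonotoneOn G (Icc t θ) := by
      refine monotoneOn_of_deriv_nonneg (convex_Icc t θ)
        (fun s hs => (hG s (ht.trans_le hs.1)).continuousAt.continuousWithinAt)
        (fun s hs => ?_) (fun s hs => ?_)
      all_goals rw [interior_Icc] at hs
      all_goals have hs0 : 0 < s := ht.trans hs.1
      · exact (hG s hs0).differentiableAt.differentiableWithinAt
      · rw [(hG s hs0).deriv]
        refine mul_nonneg (hA s hs0) ?_
        have hX : X s ≤ 1 := Real.exp_le_one_iff.2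
          (sub_nonpos.2 (hZmono ht hs0 hs.1.le))
        rw [sub_nonneg, div_le_one hs0]
        nlinarith [hs.1]
    exact hm (left_mem_Icc.2 h) (right_mem_Icc.2 h) h
  · have hm : AntitoneOn G (Icc θ t) := by
      refine antitoneOn_of_deriv_nonpos (convex_Icc θ t)
        (fun s hs => (hG s (hθ.trans_le hs.1)).continuousAt.continuousWithinAt)
        (fun s hs => ?_) (fun s hs => ?_)
      all_goals rw [interior_Icc] at hs
      all_goals have hs0 : 0 < s := hθ.trans hs.1
      · exact (hG s hs0).differentiableAt.differentiableWithinAt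
      · rw [(hG s hs0).deriv]
        refine mul_nonpos_of_nonneg_of_nonpos (hA s hs0) ?_
        have hX : 1 ≤ X s := Real.one_le_exp
          (sub_nonneg.2 (hZmono hs0 ht hs.2.le))
        rw [sub_nonpos, one_le_div hs0]
        nlinarith [hs.2]
    exact hm (left_mem_Icc.2 h) (right_mem_Icc.2 h) h

open Set Filter in
/-- As `t → 0`, `h(t)²` tends to the infimum of the strictly increasing function
`(1 + e)² − θ²`, so it eventually drops below any of its values. -/
theorem eos_small {e : ℝ → ℝ}
    (hdiff : ∀ ξ : ℝ, 0 < ξ → DifferentiableAt ℝ e ξ)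
    (hpos : ∀ ξ : ℝ, 0 < ξ → 0 < e ξ)
    (hineq : ∀ ξ : ℝ, 0 < ξ → ξ / (e ξ + 1) < deriv e ξ)
    {θ : ℝ} (hθ : 0 < θ) :
    ∀ᶠ t in nhdsWithin (0:ℝ) (Ioi 0), (hfun e t) ^ 2 ≤ (1 + e θ) ^ 2 - θ ^ 2 := by
  have hmono := eos_strictMono hdiff hpos hineq
  have hhalf : 0 < θ / 2 := by linarith
  have hgap := hmono hhalf hθ (by linarith : θ / 2 < θ)
  have hlim : Tendsto (fun t : ℝ => 2 * t * (1 + e (θ / 2)) + 2 * t ^ 2) (nhds 0) (nhds 0) := by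
    have : Continuous (fun t : ℝ => 2 * t * (1 + e (θ / 2)) + 2 * t ^ 2) := by fun_prop
    simpa using this.tendsto 0
  have hsmall := (hlim.eventually_lt_const (sub_pos.2 hgap)).filter_mono
    (nhdsWithin_le_nhds (s := Ioi 0))
  have hlt : ∀ᶠ t in nhdsWithin (0:ℝ) (Ioi 0), t < θ / 2 :=
    (eventually_lt_nhds hhalf).filter_mono nhdsWithin_le_nhds
  have hemono : MonotoneOn e (Ioi 0) := by
    refine monotoneOn_of_deriv_nonneg (convex_Ioi 0)
      (fun s hs => (hdiff s hs).continuousAt.continuousWithinAt)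
      (fun s hs => ?_) (fun s hs => ?_)
    all_goals rw [interior_Ioi] at hs
    · exact (hdiff s hs).differentiableWithinAt
    · exact (eos_mul_deriv hpos hineq hs).1.le
  filter_upwards [hsmall, hlt, self_mem_nhdsWithin] with t h1 h2 h3
  have h3' : 0 < t := h3
  have h4 := (hmono h3 hhalf h2).le
  have h5 := hemono h3 hhalf h2.le
  simp only at h1 h4
  unfold hfun
  nlinarith [mul_le_mul_of_nonneg_left h5 h3'.le]

/-! ### Linear functionals, fluxes and null directions -/

/-- The linear functional `u ↦ u_E − w · u_m − a u_D` on conservative vectors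
`u = (u_D, u_m, u_E)`; it is `u ↦ u · n_*(w, θ_*)` when `a = h(θ_*) √(1 − |w|²)`. -/
def cfun {d : ℕ} (a : ℝ) (w : Fin d → ℝ) : (ℝ × (Fin d → ℝ) × ℝ) →ₗ[ℝ] ℝ where
  toFun u := u.2.2 - dotp w u.2.1 - a * u.1
  map_add' u u' := by
    simp only [dotp, Prod.fst_add, Prod.snd_add, Pi.add_apply, mul_add, Finset.sum_add_distrib]
    ring
  map_smul' c u := by
    simp only [dotp, Prod.smul_fst, Prod.smul_snd, Pi.smul_apply, smul_eq_mul, RingHom.id_apply,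
      mul_sub, Finset.mul_sum]
    congr 1
    · congr 1
      exact Finset.sum_congr rfl fun i _ => by ring
    · ring

theorem cfun_apply {d : ℕ} (a : ℝ) (w : Fin d → ℝ) (u : ℝ × (Fin d → ℝ) × ℝ) :
    cfun a w u = u.2.2 - dotp w u.2.1 - a * u.1 := rfl

theorem flux_eq (e : ℝ → ℝ) {d : ℕ} (ζ : Fin d → ℝ) (ρ : ℝ) (v : Fin d → ℝ) (θ : ℝ) :
    ∑ i, ζ i • Fvec e i ρ v θ =
      (ρ * gam v * dotp ζ v,
       fun j => ρ * hfun e θ * (gam v) ^ 2 * dotp ζ v * v j + ρ * θ * ζ j,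
       ρ * hfun e θ * (gam v) ^ 2 * dotp ζ v) := by
  refine Prod.ext ?_ (Prod.ext ?_ ?_)
  · simp only [Prod.fst_sum, Fvec, Prod.smul_fst, smul_eq_mul, dotp, Finset.mul_sum]
    exact Finset.sum_congr rfl fun i _ => by ring
  · funext j
    simp only [Prod.snd_sum, Prod.fst_sum, Fvec, Prod.smul_fst, Prod.smul_snd, smul_eq_mul, dotp,
      Finset.sum_apply, Pi.smul_apply, mul_add, Finset.sum_add_distrib, Finset.mul_sum,
      Finset.sum_mul]
    congr 1
    · exact Finset.sum_congr rfl fun i _ => by ring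
    · simp [mul_comm]
  · simp only [Prod.snd_sum, Fvec, Prod.smul_snd, smul_eq_mul, dotp, Finset.mul_sum]
    exact Finset.sum_congr rfl fun i _ => by ring

theorem nrm_lt_one_iff {d : ℕ} (v : Fin d → ℝ) : nrm v < 1 ↔ nsq v < 1 := by
  rw [nrm, Real.sqrt_lt' one_pos, one_pow]

/-- Expansion of `0 ≤ |b(v − ζ) − a(w − ζ)|²`. -/
theorem nsq_lincomb {d : ℕ} (a b : ℝ) (v w ζ : Fin d → ℝ) :
    0 ≤ b ^ 2 * (nsq v - 2 * dotp ζ v + nsq ζ) + a ^ 2 * (nsq w - 2 * dotp ζ w + nsq ζ)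
      - 2 * a * b * (dotp w v - dotp ζ v - dotp ζ w + nsq ζ) := by
  have h : 0 ≤ ∑ i, (b * (v i - ζ i) - a * (w i - ζ i)) ^ 2 :=
    Finset.sum_nonneg fun i _ => sq_nonneg _
  convert h using 1
  simp only [nsq, dotp, Finset.mul_sum, ← Finset.sum_sub_distrib, ← Finset.sum_add_distrib]
  exact Finset.sum_congr rfl fun i _ => by ring

theorem dotp_lt_one {d : ℕ} {v ζ : Fin d → ℝ} (hζ : nsq ζ = 1) (hv : nsq v < 1) :
    dotp ζ v < 1 := by
  have := nsq_lincomb 0 1 v v ζ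
  linarith

/-- With `a = 1 − ζ·v`, `b = 1 − ζ·w`: the reversed Cauchy–Schwarz type inequality behind the
flux estimate, saying that the relative Lorentz factor of two unit timelike vectors is at least
`(r + 1/r)/2`, where `r` is the ratio of their products with a null vector. -/
theorem null_ineq {d : ℕ} {v w ζ : Fin d → ℝ} (hζ : nsq ζ = 1) :
    (1 - dotp ζ v) ^ 2 * (1 - nsq w) + (1 - dotp ζ w) ^ 2 * (1 - nsq v) ≤
      2 * (1 - dotp ζ v) * (1 - dotp ζ w) * (1 - dotp w v) := by
  have := nsq_lincomb (1 - dotp ζ v) (1 - dotp ζ w) v w ζ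
  rw [hζ] at this
  linarith

theorem dotp_smul_add {d : ℕ} (w v ζ : Fin d → ℝ) (a b c : ℝ) :
    dotp w (fun j => a * v j - (b * v j + c * ζ j)) = (a - b) * dotp w v - c * dotp ζ w := by
  simp only [dotp, Finset.mul_sum, ← Finset.sum_sub_distrib]
  exact Finset.sum_congr rfl fun i _ => by ring

/-- The functional `cfun` with `a = H √(1 − |w|²)` is bounded below on `U − ∑ ζ_i F_i` as soon as
`H` and `P` satisfy `hP`, which says that a certain quadratic form has nonpositive discriminant.
The bound `P (1 − ζ·w)` is affine in `ζ`, so it sums up over a closed polygon. -/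
theorem flux_ineq (e : ℝ → ℝ) {d : ℕ} {v w ζ : Fin d → ℝ} {ρ θ H P : ℝ}
    (hζ : nsq ζ = 1) (hv : nsq v < 1) (hw : nsq w < 1) (hρ : 0 < ρ) (hh : 0 < hfun e θ)
    (hP : ρ * H ^ 2 ≤ hfun e θ * (ρ * hfun e θ + 2 * (P - ρ * θ))) :
    -(P * (1 - dotp ζ w)) ≤
      cfun (H * Real.sqrt (1 - nsq w)) w (Uvec e ρ v θ - ∑ i, ζ i • Fvec e i ρ v θ) := by
  have ha : 0 < 1 - dotp ζ v := sub_pos.2 (dotp_lt_one hζ hv)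
  have hb : 0 < 1 - dotp ζ w := sub_pos.2 (dotp_lt_one hζ hw)
  have hnull := null_ineq (v := v) (w := w) hζ
  have hk : 0 < Real.sqrt (1 - nsq v) := Real.sqrt_pos.2 (by linarith)
  have hk2 := Real.sq_sqrt (show 0 ≤ 1 - nsq v by linarith)
  have hq2 := Real.sq_sqrt (show 0 ≤ 1 - nsq w by linarith)
  have hval : cfun (H * Real.sqrt (1 - nsq w)) w (Uvec e ρ v θ - ∑ i, ζ i • Fvec e i ρ v θ) =
      (1 - dotp ζ v) * (ρ * hfun e θ * gam v ^ 2 * (1 - dotp w v)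
        - H * Real.sqrt (1 - nsq w) * ρ * gam v) - ρ * θ * (1 - dotp ζ w) := by
    rw [flux_eq, cfun_apply]
    simp only [Uvec, Prod.fst_sub, Prod.snd_sub, Pi.sub_def]
    rw [dotp_smul_add]
    ring
  rw [hval, gam]
  rw [← hk2, ← hq2] at hnull
  generalize Real.sqrt (1 - nsq v) = k at *
  generalize Real.sqrt (1 - nsq w) = q at *
  generalize 1 - dotp ζ v = a at *
  generalize 1 - dotp ζ w = b at *
  generalize 1 - dotp w v = g at *
  generalize hfun e θ = h at *
  -- the quadratic form in `X = a q`, `Y = b k` is nonnegative since its discriminant is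
  have hquad : 0 ≤ ρ * h * (a * q) ^ 2 - 2 * ρ * H * (a * q) * (b * k)
      + (ρ * h + 2 * (P - ρ * θ)) * (b * k) ^ 2 := by
    have h1 : 0 ≤ (h * (a * q) - H * (b * k)) ^ 2 * ρ := by positivity
    have h2 := mul_le_mul_of_nonneg_right hP (sq_nonneg (b * k))
    refine nonneg_of_mul_nonneg_right (a := h) ?_ hh
    linarith
  have h3 := mul_le_mul_of_nonneg_left hnull (show 0 ≤ ρ * h by positivity)
  -- `1 / k` is the Lorentz factor of `v`; clearing denominators turns the claim into `hquad`
  have h4 : 0 ≤ (2 * b * k ^ 2) * (a * (ρ * h * (1 / k) ^ 2 * g - H * q * ρ * (1 / k))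
      - ρ * θ * b + P * b) := by
    have : (2 * b * k ^ 2) * (a * (ρ * h * (1 / k) ^ 2 * g - H * q * ρ * (1 / k))
      - ρ * θ * b + P * b) = ρ * h * (2 * a * b * g) - 2 * ρ * H * (a * q) * (b * k)
        + 2 * (P - ρ * θ) * (b * k) ^ 2 := by
      field_simp
      ring
    rw [this]
    linarith
  have h5 := nonneg_of_mul_nonneg_right h4 (show 0 < 2 * b * k ^ 2 by positivity)
  linarith

/-- The average of `flux_ineq` over the directions `ζ` and `-ζ`. -/
theorem state_ineq (e : ℝ → ℝ) {d : ℕ} {v w ζ : Fin d → ℝ} {ρ θ H P : ℝ}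
    (hζ : nsq ζ = 1) (hv : nsq v < 1) (hw : nsq w < 1) (hρ : 0 < ρ) (hh : 0 < hfun e θ)
    (hP : ρ * H ^ 2 ≤ hfun e θ * (ρ * hfun e θ + 2 * (P - ρ * θ))) :
    -P ≤ cfun (H * Real.sqrt (1 - nsq w)) w (Uvec e ρ v θ) := by
  have hζ' : nsq (-ζ) = 1 := by simpa [nsq] using hζ
  have h1 := flux_ineq e hζ hv hw hρ hh hP
  have h2 := flux_ineq e hζ' hv hw hρ hh hP
  have h3 : dotp (-ζ) w = - dotp ζ w := by simp [dotp]
  have h4 : ∑ i, (-ζ) i • Fvec e i ρ v θ = -∑ i, ζ i • Fvec e i ρ v θ := by simp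
  rw [h3, h4] at h2
  rw [map_sub] at h1 h2
  rw [map_neg] at h2
  linarith

/-! ### Recovering a primitive state -/

/-- A conservative vector of positive mass satisfying the linear inequalities of `hQ` and, at one
temperature `t₀`, the ones of `hQ₀` without the term `p_*`, lies in `Ω_σ`.

With `u = (D, m, E)` and `R(t) = √(D² h(t)² + |m|²)`, a state of temperature `θ` with mass `D` and
momentum `m` must have `v = m/R(θ)`, `ρ = D² h(θ)/R(θ)` and energy
`Φ(θ) = R(θ) − D² h(θ) θ/R(θ)`, so `θ` has to solve `Φ(θ) = E`. Here `hQ₀` gives `R(t₀) ≤ E`,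
hence `Φ(t₀) ≤ E`, and `Φ` is unbounded. At the solution, `hQ` with `t = θ` reads `ρ θ ≤ p_*(θ)`,
which is the entropy bound. -/
theorem recover {e : ℝ → ℝ}
    (hdiff : ∀ ξ : ℝ, 0 < ξ → DifferentiableAt ℝ e ξ)
    (hpos : ∀ ξ : ℝ, 0 < ξ → 0 < e ξ)
    (hineq : ∀ ξ : ℝ, 0 < ξ → ξ / (e ξ + 1) < deriv e ξ)
    {d : ℕ} {σ : ℝ} {u : ℝ × (Fin d → ℝ) × ℝ} (hD : 0 < u.1)
    (hQ : ∀ t : ℝ, 0 < t → ∀ w : Fin d → ℝ, nsq w < 1 →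
      -(pstar e σ t) ≤ cfun (hfun e t * Real.sqrt (1 - nsq w)) w u)
    {t₀ : ℝ} (ht₀ : 0 < t₀) (hQ₀ : ∀ w : Fin d → ℝ, nsq w < 1 →
      0 ≤ cfun (hfun e t₀ * Real.sqrt (1 - nsq w)) w u) :
    u ∈ OmegaSet e d σ := by
  obtain ⟨D, m, E⟩ := u
  simp only at hD
  have hM0 : 0 ≤ nsq m := Finset.sum_nonneg fun i _ => sq_nonneg _
  let R : ℝ → ℝ := fun t => Real.sqrt (D ^ 2 * hfun e t ^ 2 + nsq m)
  have hh : ∀ t : ℝ, 0 < t → 1 < hfun e t := fun t ht => by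
    have := hpos t ht
    unfold hfun
    linarith
  have hR2 : ∀ t, R t ^ 2 = D ^ 2 * hfun e t ^ 2 + nsq m := fun t =>
    Real.sq_sqrt (by positivity)
  have hR : ∀ t : ℝ, 0 < t → 0 < R t := fun t ht => by
    have := hh t ht
    exact Real.sqrt_pos.2 (by positivity)
  have hw : ∀ t : ℝ, 0 < t → 1 - nsq (fun i => m i / R t) = (D * hfun e t / R t) ^ 2 := by
    intro t ht
    have h1 : nsq (fun i => m i / R t) = nsq m / R t ^ 2 := by
      simp only [nsq, div_pow, Finset.sum_div]
    have := hR t ht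
    rw [h1]
    field_simp
    rw [hR2]
    ring
  have hs : ∀ t : ℝ, 0 < t → Real.sqrt (1 - nsq (fun i => m i / R t)) = D * hfun e t / R t := by
    intro t ht
    rw [hw t ht, Real.sqrt_sq]
    have := hh t ht
    have := hR t ht
    positivity
  have hw1 : ∀ t : ℝ, 0 < t → nsq (fun i => m i / R t) < 1 := by
    intro t ht
    have h1 := hh t ht
    have h2 := hR t ht
    have : 0 < (D * hfun e t / R t) ^ 2 := by positivity
    linarith [hw t ht]
  -- at `w = m / R t` the functional takes its least value `E - R t`
  have hval : ∀ t : ℝ, 0 < t → cfun (hfun e t * Real.sqrt (1 - nsq (fun i => m i / R t)))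
      (fun i => m i / R t) (D, m, E) = E - R t := by
    intro t ht
    have h2 := hR t ht
    have h1 : dotp (fun i => m i / R t) m = nsq m / R t := by
      simp only [dotp, nsq, Finset.sum_div]
      exact Finset.sum_congr rfl fun i _ => by ring
    rw [cfun_apply, hs t ht]
    simp only [h1]
    field_simp
    linear_combination hR2 t
  let Φ : ℝ → ℝ := fun t => R t - D ^ 2 * hfun e t * t / R t
  -- `Φ t` is the energy of the state of temperature `t`, mass `D` and momentum `m`
  have hlow : Φ t₀ ≤ E := by
    have h1 := hQ₀ _ (hw1 t₀ ht₀)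
    rw [hval t₀ ht₀] at h1
    have h2 := hR t₀ ht₀
    have h3 := hh t₀ ht₀
    have : 0 ≤ D ^ 2 * hfun e t₀ * t₀ / R t₀ := by positivity
    simp only [Φ]
    linarith
  obtain ⟨t₁, h01, hupp⟩ : ∃ t₁, t₀ ≤ t₁ ∧ E ≤ Φ t₁ := by
    -- `Φ s ≥ D² s / (D + |m|)` for `s ≥ 1`, because `1 + e s ≥ s` and `R s ≤ h(s) (D + |m|)`
    let s : ℝ := max (max 1 t₀) (E * (D + Real.sqrt (nsq m)) / D ^ 2)
    have hs1 : 1 ≤ s := (le_max_left _ _).trans (le_max_left _ _)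
    have hst : t₀ ≤ s := (le_max_right _ _).trans (le_max_left _ _)
    have hsE : E * (D + Real.sqrt (nsq m)) / D ^ 2 ≤ s := le_max_right _ _
    have hs0 : 0 < s := by linarith
    refine ⟨s, hst, ?_⟩
    have hes := hpos s hs0
    have hc : s ≤ 1 + e s := by
      have h1 := (eos_strictMono hdiff hpos hineq).monotoneOn
        (Set.mem_Ioi.2 (one_pos (α := ℝ))) (Set.mem_Ioi.2 hs0) hs1
      have h2 := hpos 1 one_pos
      nlinarith
    have hRs := hR s hs0
    have hh1 := hh s hs0
    have hM := Real.sqrt_nonneg (nsq m)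
    have hM2 := Real.sq_sqrt hM0
    have hRle : R s ≤ hfun e s * (D + Real.sqrt (nsq m)) := by
      refine Real.sqrt_le_iff.2 ⟨by positivity, ?_⟩
      have h3 : nsq m ≤ hfun e s ^ 2 * nsq m := le_mul_of_one_le_left hM0 (by nlinarith)
      have h4 : 0 ≤ hfun e s ^ 2 * (2 * D * Real.sqrt (nsq m)) := by positivity
      calc D ^ 2 * hfun e s ^ 2 + nsq m
          ≤ D ^ 2 * hfun e s ^ 2 + hfun e s ^ 2 * nsq m
            + hfun e s ^ 2 * (2 * D * Real.sqrt (nsq m)) := by linarith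
        _ = _ := by
          conv_lhs => rw [← hM2]
          rw [Real.sqrt_sq hM]
          ring
    have hE : E * (D + Real.sqrt (nsq m)) ≤ s * D ^ 2 := by
      rwa [div_le_iff₀ (by positivity)] at hsE
    have hΦ : Φ s = (D ^ 2 * hfun e s * (1 + e s) + nsq m) / R s := by
      simp only [Φ]
      field_simp
      rw [hR2]
      unfold hfun
      ring
    rw [hΦ, le_div_iff₀ hRs]
    have h5 : D ^ 2 * hfun e s * s ≤ D ^ 2 * hfun e s * (1 + e s) :=
      mul_le_mul_of_nonneg_left hc (by positivity)
    rcases le_total E 0 with hE0 | hE0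
    · have : E * R s ≤ 0 := mul_nonpos_of_nonpos_of_nonneg hE0 hRs.le
      have : 0 ≤ D ^ 2 * hfun e s * s := by positivity
      linarith
    · have h6 := mul_le_mul_of_nonneg_left hRle hE0
      have h7 := mul_le_mul_of_nonneg_left hE (show 0 ≤ hfun e s by linarith)
      linarith
  have hcont : ContinuousOn Φ (Set.Icc t₀ t₁) := by
    intro t ht
    have ht0 : 0 < t := ht₀.trans_le ht.1
    have he : ContinuousAt (hfun e) t :=
      (continuousAt_const.add continuousAt_id).add (hdiff t ht0).continuousAt
    have hRc : ContinuousAt R t :=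
      ((continuousAt_const.mul (he.pow 2)).add continuousAt_const).sqrt
    exact (hRc.sub (((continuousAt_const.mul he).mul continuousAt_id).div hRc
      (hR t ht0).ne')).continuousWithinAt
  obtain ⟨θ, hθ, hΦθ⟩ := intermediate_value_Icc h01 hcont ⟨hlow, hupp⟩
  have hθ0 : 0 < θ := ht₀.trans_le hθ.1
  have hRθ := hR θ hθ0
  have hhθ := hh θ hθ0
  have hρ : 0 < D ^ 2 * hfun e θ / R θ := by positivity
  have hgam : gam (fun i => m i / R θ) = R θ / (D * hfun e θ) := by
    rw [gam, hs θ hθ0, one_div_div]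
  have hRρ : D ^ 2 * hfun e θ / R θ * hfun e θ * (R θ / (D * hfun e θ)) ^ 2 = R θ := by
    field_simp
  refine ⟨D ^ 2 * hfun e θ / R θ, θ, fun i => m i / R θ, hρ, hθ0,
    (nrm_lt_one_iff _).2 (hw1 θ hθ0), ?_, ?_⟩
  · have h1 := hQ θ hθ0 _ (hw1 θ hθ0)
    rw [hval θ hθ0, ← hΦθ] at h1
    simp only [Φ, pstar] at h1
    have h2 : θ * (D ^ 2 * hfun e θ / R θ) ≤ θ * Real.exp (Zfun e θ - σ) := by
      have : D ^ 2 * hfun e θ * θ / R θ = θ * (D ^ 2 * hfun e θ / R θ) := by ring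
      linarith
    have h3 := Real.log_le_log hρ (le_of_mul_le_mul_left h2 hθ0)
    rw [Real.log_exp] at h3
    linarith
  · simp only [Uvec, hgam, hRρ]
    refine Prod.ext ?_ (Prod.ext ?_ ?_)
    · simp only
      field_simp
    · funext i
      simp only
      field_simp
    · simp only
      rw [← hΦθ]
      simp only [Φ]
      ring

/-! ### The Lax–Friedrichs update -/

/-- Writing `s = (Δt / 2|K|) ∑ ℓ_j`, the update is the combination
`(1 − s) U_K + (Δt / 2|K|) ∑ ℓ_j (U_j − F(U_j)ξ^{(j)})`: the flux of `U_K` through the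
closed boundary cancels. -/
theorem update_eq {V : Type*} [AddCommGroup V] [Module ℝ V] {d N : ℕ} {K Δt : ℝ}
    (hK : K ≠ 0) (len : Fin N → ℝ)
    (ξ : Fin N → Fin d → ℝ) (hclosed : (∑ j, len j • ξ j) = 0)
    (UK : V) (FK : Fin d → V) (U : Fin N → V) (G : Fin N → V) :
    UK - (Δt / K) • ∑ j, len j • (((1 : ℝ) / 2) • ((∑ i, ξ j i • FK i) + G j + UK - U j)) =
      (1 - Δt / (2 * K) * ∑ j, len j) • UK +
        (Δt / (2 * K)) • ∑ j, len j • (U j - G j) := by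
  have hflux : ∑ j, len j • ∑ i, ξ j i • FK i = 0 := by
    simp only [Finset.smul_sum, smul_smul]
    rw [Finset.sum_comm]
    refine Finset.sum_eq_zero fun i _ => ?_
    rw [← Finset.sum_smul]
    have := congrFun hclosed i
    simp only [Finset.sum_apply, Pi.smul_apply, smul_eq_mul, Pi.zero_apply] at this
    rw [this, zero_smul]
  have h1 : ∑ j, len j • (((1 : ℝ) / 2) • ((∑ i, ξ j i • FK i) + G j + UK - U j)) =
      ((1 : ℝ) / 2) • ((∑ j, len j • ∑ i, ξ j i • FK i) + (∑ j, len j) • UK -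
        ∑ j, len j • (U j - G j)) := by
    rw [Finset.sum_smul, ← Finset.sum_add_distrib, ← Finset.sum_sub_distrib, Finset.smul_sum]
    refine Finset.sum_congr rfl fun j _ => ?_
    module
  rw [h1, hflux, zero_add, smul_smul]
  have h2 : Δt / K * (1 / 2) = Δt / (2 * K) := by field_simp
  rw [h2]
  module

/-- The discriminant condition of `flux_ineq` holds for every `t > 0`, with `H = h(t)` and
`P = p_*(t)`, at a state of specific entropy at least `σ`. -/
theorem discr_of_entropy {e : ℝ → ℝ}
    (hdiff : ∀ ξ : ℝ, 0 < ξ → DifferentiableAt ℝ e ξ)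
    (hpos : ∀ ξ : ℝ, 0 < ξ → 0 < e ξ)
    (hineq : ∀ ξ : ℝ, 0 < ξ → ξ / (e ξ + 1) < deriv e ξ)
    {σ ρ θ t : ℝ} (hρ : 0 < ρ) (hθ : 0 < θ) (ht : 0 < t)
    (hS : σ ≤ -Real.log ρ + Zfun e θ) :
    ρ * hfun e t ^ 2 ≤ hfun e θ * (ρ * hfun e θ + 2 * (pstar e σ t - ρ * θ)) := by
  have h1 := mul_le_mul_of_nonneg_left (eos_key hdiff hpos hineq hθ ht) hρ.le
  have h2 : ρ * Real.exp (Zfun e t - Zfun e θ) ≤ Real.exp (Zfun e t - σ) := by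
    rw [← Real.exp_log hρ, ← Real.exp_add]
    exact Real.exp_le_exp.2 (by linarith)
  have hh : 0 < hfun e θ := by
    have := hpos θ hθ
    unfold hfun
    linarith
  have h3 := mul_le_mul_of_nonneg_left h2 (show 0 ≤ 2 * hfun e θ * t by positivity)
  have h4 : (1 + e θ) ^ 2 - θ ^ 2 = hfun e θ ^ 2 - 2 * hfun e θ * θ := by
    unfold hfun
    ring
  rw [h4] at h1
  unfold pstar
  linarith

/-- If the discriminant condition of `flux_ineq` with parameters `H`, `P` holds at `U_K` and at
all `U_j`, then the update satisfies the corresponding linear inequality: the terms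
`P (1 − ξ^{(j)}·w)` add up to a multiple of `P` because the normals sum to zero. -/
theorem update_ineq (e : ℝ → ℝ) {d N : ℕ} (hN : 1 ≤ N)
    {len : Fin N → ℝ} (hlen : ∀ j, 0 < len j)
    {ξ : Fin N → Fin d → ℝ} (hξ : ∀ j, nsq (ξ j) = 1)
    (hclosed : (∑ j, len j • ξ j) = 0) {c : ℝ} (hc : 0 < c) (hCFL : c * ∑ j, len j ≤ 1)
    {ρK : ℝ} {vK : Fin d → ℝ} {θK : ℝ} (hρK : 0 < ρK) (hvK : nsq vK < 1) (hhK : 0 < hfun e θK)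
    {ρ : Fin N → ℝ} {v : Fin N → Fin d → ℝ} {θ : Fin N → ℝ}
    (hρ : ∀ j, 0 < ρ j) (hv : ∀ j, nsq (v j) < 1) (hh : ∀ j, 0 < hfun e (θ j))
    {H P : ℝ}
    (hPK : ρK * H ^ 2 ≤ hfun e θK * (ρK * hfun e θK + 2 * (P - ρK * θK)))
    (hP : ∀ j, ρ j * H ^ 2 ≤
      hfun e (θ j) * (ρ j * hfun e (θ j) + 2 * (P - ρ j * θ j)))
    {w : Fin d → ℝ} (hw : nsq w < 1) :
    -P ≤ cfun (H * Real.sqrt (1 - nsq w)) w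
      ((1 - c * ∑ j, len j) • Uvec e ρK vK θK + c • ∑ j, len j •
        (Uvec e (ρ j) (v j) (θ j) - ∑ i, ξ j i • Fvec e i (ρ j) (v j) (θ j))) := by
  have h1 := state_ineq e (hξ ⟨0, hN⟩) hvK hw hρK hhK hPK
  have h2 : ∑ j, len j * -(P * (1 - dotp (ξ j) w)) ≤ ∑ j, len j *
      cfun (H * Real.sqrt (1 - nsq w)) w
        (Uvec e (ρ j) (v j) (θ j) - ∑ i, ξ j i • Fvec e i (ρ j) (v j) (θ j)) :=
    Finset.sum_le_sum fun j _ => mul_le_mul_of_nonneg_left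
      (flux_ineq e (hξ j) (hv j) hw (hρ j) (hh j) (hP j)) (hlen j).le
  have h3 : ∑ j, len j * dotp (ξ j) w = 0 := by
    simp only [dotp, Finset.mul_sum]
    rw [Finset.sum_comm]
    refine Finset.sum_eq_zero fun i _ => ?_
    have := congrFun hclosed i
    simp only [Finset.sum_apply, Pi.smul_apply, smul_eq_mul, Pi.zero_apply] at this
    simp only [← mul_assoc]
    rw [← Finset.sum_mul, this, zero_mul]
  have h4 : ∑ j, len j * -(P * (1 - dotp (ξ j) w)) = -P * ∑ j, len j := by
    calc ∑ j, len j * -(P * (1 - dotp (ξ j) w))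
        = ∑ j, (-P * len j + P * (len j * dotp (ξ j) w)) :=
          Finset.sum_congr rfl fun j _ => by ring
      _ = _ := by rw [Finset.sum_add_distrib, ← Finset.mul_sum, ← Finset.mul_sum, h3]; ring
  rw [h4] at h2
  simp only [map_add, map_smul, map_sum, smul_eq_mul]
  have h5 := mul_le_mul_of_nonneg_left h1 (sub_nonneg.2 hCFL)
  have h6 := mul_le_mul_of_nonneg_left h2 hc.le
  linarith

theorem update_mass_pos (e : ℝ → ℝ) {d N : ℕ} (hN : 1 ≤ N)
    {len : Fin N → ℝ} (hlen : ∀ j, 0 < len j)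
    {ξ : Fin N → Fin d → ℝ} (hξ : ∀ j, nsq (ξ j) = 1)
    {c : ℝ} (hc : 0 < c) (hCFL : c * ∑ j, len j ≤ 1)
    {ρK : ℝ} {vK : Fin d → ℝ} {θK : ℝ} (hρK : 0 < ρK)
    {ρ : Fin N → ℝ} {v : Fin N → Fin d → ℝ} {θ : Fin N → ℝ}
    (hρ : ∀ j, 0 < ρ j) (hv : ∀ j, nsq (v j) < 1) :
    0 < ((1 - c * ∑ j, len j) • Uvec e ρK vK θK + c • ∑ j, len j •
        (Uvec e (ρ j) (v j) (θ j) - ∑ i, ξ j i • Fvec e i (ρ j) (v j) (θ j))).1 := by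
  have h1 : 0 ≤ (1 - c * ∑ j, len j) * (ρK * gam vK) :=
    mul_nonneg (sub_nonneg.2 hCFL)
      (mul_nonneg hρK.le (div_nonneg zero_le_one (Real.sqrt_nonneg _)))
  have : Nonempty (Fin N) := ⟨⟨0, hN⟩⟩
  have h2 : 0 < ∑ j, len j * (ρ j * gam (v j) - ρ j * gam (v j) * dotp (ξ j) (v j)) := by
    refine Finset.sum_pos (fun j _ => mul_pos (hlen j) ?_) Finset.univ_nonempty
    have h3 : 0 < gam (v j) := one_div_pos.2 (Real.sqrt_pos.2 (by linarith [hv j]))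
    have h4 := mul_pos (mul_pos (hρ j) h3) (sub_pos.2 (dotp_lt_one (hξ j) (hv j)))
    linarith
  simp only [flux_eq, Prod.fst_add, Prod.smul_fst, Prod.fst_sum, Prod.fst_sub, Uvec, smul_eq_mul]
  have := mul_pos hc h2
  linarith

/-- first-order multidimensional scheme is entropy-preserving.
Let `e` be a Synge-type EOS, `d ≥ 1`, `σ ∈ ℝ`. Given a polygonal cell `K` with
edge lengths `ℓ_j > 0` and outward unit normals `ξ^{(j)}` satisfying
`Σ_j ℓ_j ξ^{(j)} = 0`, area `|K| > 0`, time step `Δt > 0` with CFL condition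
`(Δt/(2|K|))·Σ_j ℓ_j ≤ 1`, and admissible primitive states in `K` and its neighbors
(each with specific entropy at least `σ`), the Lax–Friedrichs update
`U_K⁺ = U_K − (Δt/|K|)·Σ_j ℓ_j·½(F(U_K)ξ^{(j)} + F(U_j)ξ^{(j)} + U_K − U_j)`
belongs to `Ω_σ`. -/
theorem minimum_entropy_stmt17 (e : ℝ → ℝ)
    (hdiff : ∀ ξ : ℝ, 0 < ξ → DifferentiableAt ℝ e ξ)
    (hpos : ∀ ξ : ℝ, 0 < ξ → 0 < e ξ)
    (hineq : ∀ ξ : ℝ, 0 < ξ → ξ / (e ξ + 1) < deriv e ξ)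
    (d : ℕ) (hd : 1 ≤ d) (σ : ℝ)
    (N : ℕ) (hN : 1 ≤ N)
    (len : Fin N → ℝ) (hlen : ∀ j, 0 < len j)
    (ξ : Fin N → Fin d → ℝ) (hξ : ∀ j, nrm (ξ j) = 1)
    (hclosed : (∑ j, len j • ξ j) = 0)
    (K Δt : ℝ) (hK : 0 < K) (hΔt : 0 < Δt)
    (hCFL : Δt / (2 * K) * ∑ j, len j ≤ 1)
    (ρK : ℝ) (vK : Fin d → ℝ) (θK : ℝ)
    (hρK : 0 < ρK) (hθK : 0 < θK) (hvK : nrm vK < 1)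
    (hSK : σ ≤ -Real.log ρK + Zfun e θK)
    (ρ : Fin N → ℝ) (v : Fin N → Fin d → ℝ) (θ : Fin N → ℝ)
    (hρ : ∀ j, 0 < ρ j) (hθ : ∀ j, 0 < θ j) (hv : ∀ j, nrm (v j) < 1)
    (hS : ∀ j, σ ≤ -Real.log (ρ j) + Zfun e (θ j)) :
    Uvec e ρK vK θK -
        (Δt / K) • ∑ j, len j •
          (((1 : ℝ) / 2) •
            ((∑ i, ξ j i • Fvec e i ρK vK θK) +
             (∑ i, ξ j i • Fvec e i (ρ j) (v j) (θ j)) +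
             Uvec e ρK vK θK - Uvec e (ρ j) (v j) (θ j)))
      ∈ OmegaSet e d σ := by
  rw [update_eq hK.ne' len ξ hclosed (Uvec e ρK vK θK) (fun i => Fvec e i ρK vK θK)
    (fun j => Uvec e (ρ j) (v j) (θ j)) (fun j => ∑ i, ξ j i • Fvec e i (ρ j) (v j) (θ j))]
  have hc : 0 < Δt / (2 * K) := by positivity
  have hξ' : ∀ j, nsq (ξ j) = 1 := fun j => by
    have := hξ j
    rwa [nrm, Real.sqrt_eq_one] at this
  have hvK' := (nrm_lt_one_iff vK).1 hvK
  have hv' := fun j => (nrm_lt_one_iff (v j)).1 (hv j)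
  have hh : ∀ s : ℝ, 0 < s → 0 < hfun e s := fun s hs => by
    have := hpos s hs
    unfold hfun
    linarith
  -- one small temperature serving all the finitely many states at once
  obtain ⟨t₀, ⟨htK, htj⟩, ht₀⟩ := (((eos_small hdiff hpos hineq hθK).and
    (Filter.eventually_all.2 fun j => eos_small hdiff hpos hineq (hθ j))).and
      (self_mem_nhdsWithin (s := Set.Ioi (0:ℝ)))).exists
  -- the discriminant condition at `H = h(t₀)` holds even with `P = 0`
  have hcold : ∀ r s : ℝ, 0 < r → hfun e t₀ ^ 2 ≤ (1 + e s) ^ 2 - s ^ 2 →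
      r * hfun e t₀ ^ 2 ≤ hfun e s * (r * hfun e s + 2 * (0 - r * s)) := by
    intro r s hr h
    refine (mul_le_mul_of_nonneg_left h hr.le).trans_eq ?_
    unfold hfun
    ring
  refine recover hdiff hpos hineq (update_mass_pos e hN hlen hξ' hc hCFL hρK hρ hv')
    (fun t ht w hw => ?_) (t₀ := t₀) ht₀ (fun w hw => ?_)
  · exact update_ineq e hN hlen hξ' hclosed hc hCFL hρK hvK' (hh _ hθK) hρ hv'
      (fun j => hh _ (hθ j)) (discr_of_entropy hdiff hpos hineq hρK hθK ht hSK)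
      (fun j => discr_of_entropy hdiff hpos hineq (hρ j) (hθ j) ht (hS j)) hw
  · have := update_ineq e hN hlen hξ' hclosed hc hCFL hρK hvK' (hh _ hθK) hρ hv'
      (fun j => hh _ (hθ j)) (H := hfun e t₀) (P := 0) (hcold _ _ hρK htK)
      (fun j => hcold _ _ (hρ j) (htj j)) hw
    rwa [neg_zero] at this
end
end
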